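/- For all β,γ ∈ ℝ with β²+γ² > 0 there exist c_{γ,β} > 0, M > 0 and ε₀ > 0 such that for any 0 < ε ≤ ε₀ there exist Ψ_ε ∈ H²(S²) and a function F_ε : ℝ → ℝ with ΔΨ_ε − 4γY₁⁰ = F_ε(Ψ_ε), ‖βY₂⁰ + γY₁⁰ − Ψ_ε‖_{H²} ≤ Mε, and |⟨Ψ_ε,Y₆²⟩ + β²·(1/36)·(45/(11π√182))·c_{γ,β}·ε²| ≤ Mε³ and |⟨Ψ_ε,Y₄²⟩ + (1/14)·((3√3/(154π))(11γ² − 5β²) − β²·(1/(7π))·(30γ²/(7γ²+15β²)))·c_{γ,β}·ε²| ≤ Mε³. -/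

import Mathlib

open MeasureTheory
open scoped ENNReal

noncomputable section

/-- Functions on the unit sphere, represented in colatitude-longitude coordinates `(θ, φ)`. -/
abbrev SphereFun : Type := ℝ → ℝ → ℝ

/-- The `L²` inner product on the sphere:
`⟨u,v⟩ = ∫₀^{2π} ∫₀^π u v sin θ dθ dφ`. -/
def sInner (u v : SphereFun) : ℝ :=
  ∫ φ in (0:ℝ)..(2*Real.pi), ∫ θ in (0:ℝ)..Real.pi, u θ φ * v θ φ * Real.sin θ

/-- Legendre polynomials via Rodrigues' formula. -/
def legP (n : ℕ) (s : ℝ) : ℝ :=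
  (1 / ((2:ℝ)^n * (Nat.factorial n : ℝ))) * iteratedDeriv n (fun x : ℝ => (x^2 - 1)^n) s

/-- Associated Legendre functions `P_n^m`. -/
def assocLegP (n m : ℕ) (s : ℝ) : ℝ :=
  (-1 : ℝ)^m * (1 - s^2) ^ ((m : ℝ)/2) * iteratedDeriv m (legP n) s

/-- Real spherical harmonics `Y_n^m`. -/
def Ynm (n : ℕ) (m : ℤ) : SphereFun := fun θ φ =>
  if m = 0 then
    Real.sqrt ((2*(n:ℝ)+1)/(4*Real.pi)) * legP n (Real.cos θ)
  else if 0 < m then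
    (-1 : ℝ)^(m.natAbs) * Real.sqrt 2 *
      Real.sqrt ((2*(n:ℝ)+1)/(4*Real.pi) *
        ((Nat.factorial (n - m.natAbs) : ℝ) / (Nat.factorial (n + m.natAbs) : ℝ))) *
      assocLegP n m.natAbs (Real.cos θ) * Real.cos ((m.natAbs : ℝ) * φ)
  else
    (-1 : ℝ)^(m.natAbs) * Real.sqrt 2 *
      Real.sqrt ((2*(n:ℝ)+1)/(4*Real.pi) *
        ((Nat.factorial (n - m.natAbs) : ℝ) / (Nat.factorial (n + m.natAbs) : ℝ))) *
      assocLegP n m.natAbs (Real.cos θ) * Real.sin ((m.natAbs : ℝ) * φ)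

/-- The spherical-harmonic coefficient `u_n^m = ⟨u, Y_n^m⟩`. -/
def coeff (u : SphereFun) (n : ℕ) (m : ℤ) : ℝ := sInner u (Ynm n m)

/-- `μ_n = n(n+1) + 1`. -/
def muSp (n : ℕ) : ℝ := (n:ℝ)*((n:ℝ)+1)+1

/-- Squared (inhomogeneous) Sobolev norm `‖u‖²_{H^k} = Σ μ_n^k |u_n^m|²`. -/
def sobNormSq (k : ℕ) (u : SphereFun) : ℝ≥0∞ :=
  ∑' p : ℕ × ℤ, if |p.2| ≤ (p.1 : ℤ) then
    ENNReal.ofReal ((muSp p.1)^k * (coeff u p.1 p.2)^2) else 0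

/-- Squared homogeneous Sobolev norm `‖u‖²_{Ḣ^k} = Σ_{n ≥ 1} λ_n^k |u_n^m|²`. -/
def dotNormSq (k : ℕ) (u : SphereFun) : ℝ≥0∞ :=
  ∑' p : ℕ × ℤ, if 1 ≤ p.1 ∧ |p.2| ≤ (p.1 : ℤ) then
    ENNReal.ofReal (((p.1:ℝ)*((p.1:ℝ)+1))^k * (coeff u p.1 p.2)^2) else 0

/-- Squared Gevrey norm `‖u‖²_{G_λ} = Σ_{n ≥ 1} μ_n² e^{2λ√μ_n} |u_n^m|²`. -/
def gevNormSq (lam : ℝ) (u : SphereFun) : ℝ≥0∞ :=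
  ∑' p : ℕ × ℤ, if 1 ≤ p.1 ∧ |p.2| ≤ (p.1 : ℤ) then
    ENNReal.ofReal ((muSp p.1)^2 * Real.exp (2*lam*Real.sqrt (muSp p.1)) *
      (coeff u p.1 p.2)^2) else 0

/-- `∂_θ`. -/
def dTheta (u : SphereFun) : SphereFun := fun θ φ => deriv (fun t => u t φ) θ

/-- `∂_φ`. -/
def dPhi (u : SphereFun) : SphereFun := fun θ φ => deriv (fun p => u θ p) φ

/-- The Laplace–Beltrami operator in colatitude-longitude coordinates:
`Δu = (1/sinθ)∂_θ(sinθ ∂_θu) + (1/sin²θ)∂²_φu`. -/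
def lapS (u : SphereFun) : SphereFun := fun θ φ =>
  (1 / Real.sin θ) * deriv (fun t => Real.sin t * dTheta u t φ) θ
  + (1 / (Real.sin θ)^2) * dPhi (dPhi u) θ φ

/-- A zonal function: one depending only on the colatitude `θ`. -/
def Zonal (u : SphereFun) : Prop := ∀ (θ φ₁ φ₂ : ℝ), u θ φ₁ = u θ φ₂

/-- Zonal on the coordinate chart `θ ∈ [0, π]`. -/
def ZonalOn (u : SphereFun) : Prop :=
  ∀ θ ∈ Set.Icc (0:ℝ) Real.pi, ∀ (φ₁ φ₂ : ℝ), u θ φ₁ = u θ φ₂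

/-- `2π`-periodicity in the longitude. -/
def PeriodicPhi (u : SphereFun) : Prop := ∀ θ φ, u θ (φ + 2*Real.pi) = u θ φ

/-- The advection term `U·∇f` for the velocity `U = ∇⊥Ψ`, i.e.
`(1/sinθ)∂_φΨ ∂_θf − ∂_θΨ (1/sinθ)∂_φf`. -/
def advect (Ψ f : SphereFun) : SphereFun := fun θ φ =>
  (1 / Real.sin θ) * dPhi Ψ θ φ * dTheta f θ φ
  - dTheta Ψ θ φ * ((1 / Real.sin θ) * dPhi f θ φ)

/-- Smoothness in the coordinates. -/
def SphSmooth (u : SphereFun) : Prop := ContDiff ℝ (⊤ : ℕ∞) (Function.uncurry u)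

/-- A function is trivial if it is a zonal function plus an element of
`span{Y₂^m : |m| ≤ 2}`; non-triviality is the negation of this. -/
def SphNontrivial (u : SphereFun) : Prop :=
  ¬ ∃ (z : SphereFun) (c : ℤ → ℝ), Zonal z ∧
      ∀ θ ∈ Set.Icc (0:ℝ) Real.pi, ∀ φ : ℝ,
        u θ φ = z θ φ + ∑ m ∈ Finset.Icc (-2 : ℤ) 2, c m * Ynm 2 m θ φ

/-- Real analyticity on the sphere, characterized by membership in a Gevrey class. -/
def RealAnalyticSphere (u : SphereFun) : Prop := ∃ lam > 0, gevNormSq lam u < ⊤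

/-! ### Part 1: the sequence space -/

abbrev XX : Type := lp (fun _ : ℕ × ℕ => ℝ) 1

def ee (i : ℕ × ℕ) : XX := lp.single 1 i (1:ℝ)

lemma norm_ee (i : ℕ × ℕ) : ‖ee i‖ = 1 := by
  unfold ee; rw [lp.norm_single (by norm_num)]; simp

lemma XX_summable (a : XX) : Summable (fun i => |a i|) := by
  have := (lp.memℓp a).summable (by simp)
  simpa using this

lemma XX_norm (a : XX) : ‖a‖ = ∑' i, |a i| := by
  have := lp.norm_eq_tsum_rpow (p := 1) (by simp) a
  simpa using this

lemma XX_hasSum (a : XX) : HasSum (fun i => a i • ee i) a := by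
  have := lp.hasSum_single (p := 1) (by simp) a
  convert this using 2 with i
  unfold ee
  rw [← lp.single_smul]; simp

lemma XX_ext {Y : Type*} [NormedAddCommGroup Y] [NormedSpace ℝ Y] {f g : XX →L[ℝ] Y}
    (h : ∀ i, f (ee i) = g (ee i)) : f = g := by
  ext a
  have h1 := (XX_hasSum a).mapL f
  have h2 := (XX_hasSum a).mapL g
  have : (fun i => f (a i • ee i)) = (fun i => g (a i • ee i)) := by
    ext i; simp [h i]
  simp only [Function.comp_def] at h1 h2
  rw [this] at h1
  exact h1.unique h2

section lift
variable {Y : Type*} [NormedAddCommGroup Y] [NormedSpace ℝ Y] [CompleteSpace Y]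

lemma lift_summable (y : ℕ × ℕ → Y) (C : ℝ) (h : ∀ i, ‖y i‖ ≤ C) (a : XX) :
    Summable (fun i => a i • y i) := by
  refine Summable.of_norm_bounded (g := fun i => |a i| * C) ((XX_summable a).mul_right C) ?_
  intro i
  rw [norm_smul, Real.norm_eq_abs]
  exact mul_le_mul_of_nonneg_left (h i) (abs_nonneg _)

def liftX (y : ℕ × ℕ → Y) (C : ℝ) (h : ∀ i, ‖y i‖ ≤ C) : XX →L[ℝ] Y :=
  LinearMap.mkContinuous
    { toFun := fun a => ∑' i, a i • y i
      map_add' := by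
        intro a b
        rw [← (lift_summable y C h a).tsum_add (lift_summable y C h b)]
        congr 1; ext i; simp [add_smul]
      map_smul' := by
        intro c a
        rw [RingHom.id_apply, ← (lift_summable y C h a).tsum_const_smul c]
        congr 1; ext i; simp [mul_smul] } C (by
      intro a
      simp only [LinearMap.coe_mk, AddHom.coe_mk]
      rw [XX_norm, ← tsum_mul_left]
      refine tsum_of_norm_bounded ((XX_summable a).mul_left C).hasSum ?_
      intro i
      rw [norm_smul, Real.norm_eq_abs, mul_comm]
      exact mul_le_mul_of_nonneg_right (h i) (abs_nonneg _))

lemma liftX_ee (y : ℕ × ℕ → Y) (C : ℝ) (h : ∀ i, ‖y i‖ ≤ C) (i : ℕ × ℕ) :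
    liftX y C h (ee i) = y i := by
  change ∑' j, (ee i) j • y j = y i
  rw [tsum_eq_single i]
  · simp [ee, lp.single_apply_self]
  · intro j hj
    rw [ee, lp.single_apply_ne _ _ _ hj, zero_smul]

lemma XX_bound (f : XX →L[ℝ] Y) (C : ℝ) (h : ∀ i, ‖f (ee i)‖ ≤ C) (a : XX) :
    ‖f a‖ ≤ C * ‖a‖ := by
  have h1 := (XX_hasSum a).mapL f
  rw [XX_norm, ← tsum_mul_left]
  rw [← h1.tsum_eq]
  refine tsum_of_norm_bounded ((XX_summable a).mul_left C).hasSum ?_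
  intro i
  simp only [Function.comp_def, map_smul]
  rw [norm_smul, Real.norm_eq_abs, mul_comm]
  exact mul_le_mul_of_nonneg_right (h i) (abs_nonneg _)

lemma liftX_norm_le (y : ℕ × ℕ → Y) (C : ℝ) (hC : 0 ≤ C) (h : ∀ i, ‖y i‖ ≤ C) :
    ‖liftX y C h‖ ≤ C := by
  refine ContinuousLinearMap.opNorm_le_bound _ hC ?_
  exact XX_bound _ C (fun i => by rw [liftX_ee]; exact h i)

end lift

/-- multiplication -/
def mulX : XX →L[ℝ] XX →L[ℝ] XX :=
  liftX (fun i => liftX (fun j => ee (i + j)) 1 (fun j => (norm_ee _).le)) 1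
    (fun i => liftX_norm_le _ _ zero_le_one _)

lemma mulX_ee (i j : ℕ × ℕ) : mulX (ee i) (ee j) = ee (i + j) := by
  unfold mulX; rw [liftX_ee, liftX_ee]

/-- a character is multiplicative -/
lemma char_mul (χ : XX →L[ℝ] ℝ) (h : ∀ i j, χ (ee (i + j)) = χ (ee i) * χ (ee j)) (a b : XX) :
    χ (mulX a b) = χ a * χ b := by
  have h1 : ∀ i, ∀ b, χ (mulX (ee i) b) = χ (ee i) * χ b := by
    intro i b
    have : χ.comp (mulX (ee i)) = (χ (ee i)) • χ := by
      apply XX_ext; intro j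
      simp [mulX_ee, h]
    simpa using DFunLike.congr_fun this b
  have : χ.comp (mulX.flip b) = (χ b) • χ := by
    apply XX_ext; intro i
    simp [h1, mul_comm]
  have := DFunLike.congr_fun this a
  simpa [mul_comm] using this

/-! ### Part 2: evaluation -/

def uu (θ φ : ℝ) : ℝ := Real.sin θ ^ 2 * Real.cos (2 * φ)

lemma uu_abs (θ φ : ℝ) : |uu θ φ| ≤ 1 := by
  unfold uu
  rw [abs_mul, abs_pow]
  exact mul_le_one₀ (pow_le_one₀ (abs_nonneg _) (Real.abs_sin_le_one θ)) (abs_nonneg _)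
    (Real.abs_cos_le_one _)

lemma pw_bound (z y : ℝ) (hz : |z| ≤ 1) (hy : |y| ≤ 1) (i : ℕ × ℕ) :
    ‖(z/64)^i.1 * (y/64^4)^i.2‖ ≤ (1/64)^(i.1 + 4 * i.2) := by
  rw [norm_mul, norm_pow, norm_pow, pow_add, pow_mul, Real.norm_eq_abs, Real.norm_eq_abs,
    abs_div, abs_div]
  norm_num
  gcongr

lemma pw_bound' (z y : ℝ) (hz : |z| ≤ 1) (hy : |y| ≤ 1) (i : ℕ × ℕ) :
    ‖(z/64)^i.1 * (y/64^4)^i.2‖ ≤ 1 :=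
  (pw_bound z y hz hy i).trans (pow_le_one₀ (by norm_num) (by norm_num))

lemma yy_abs (θ φ : ℝ) : |uu θ φ ^ 2| ≤ 1 := by
  rw [abs_pow]; exact pow_le_one₀ (abs_nonneg _) (uu_abs θ φ)

def evX (θ φ : ℝ) : XX →L[ℝ] ℝ :=
  liftX (fun i => (Real.cos θ/64)^i.1 * (uu θ φ ^ 2/64^4)^i.2) 1
    (pw_bound' _ _ (Real.abs_cos_le_one θ) (yy_abs θ φ))

lemma evX_ee (θ φ : ℝ) (i : ℕ × ℕ) :
    evX θ φ (ee i) = (Real.cos θ/64)^i.1 * (uu θ φ ^ 2/64^4)^i.2 := liftX_ee _ _ _ _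

lemma evX_mul (θ φ : ℝ) (a b : XX) : evX θ φ (mulX a b) = evX θ φ a * evX θ φ b := by
  apply char_mul
  intro i j
  simp only [evX_ee, Prod.fst_add, Prod.snd_add, pow_add]
  ring

def LzX : XX →L[ℝ] XX :=
  liftX (fun i => if i.1 = 0 then 0 else ee (i.1 - 1, i.2)) 1 (by
    intro i; split_ifs
    · simp
    · exact (norm_ee _).le)

def LyX : XX →L[ℝ] XX :=
  liftX (fun i => if i.2 = 0 then 0 else ee (i.1, i.2 - 1)) 1 (by
    intro i; split_ifs
    · simp
    · exact (norm_ee _).le)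

def ev00 : XX →L[ℝ] ℝ :=
  liftX (fun i => if i = (0, 0) then 1 else 0) 1 (by
    intro i; split_ifs <;> simp)

def evy (y : ℝ) (hy : |y| ≤ 1) : XX →L[ℝ] ℝ :=
  liftX (fun i => if i.1 = 0 then (y/64^4)^i.2 else 0) 1 (by
    intro i; split_ifs
    · have := pw_bound' 0 y (by simp) hy (0, i.2)
      simpa using this
    · simp)

lemma yy_small (y : ℝ) (h : |y| ≤ 1) : |y/64^4| < 1 := by
  rw [abs_div, abs_of_pos (show (0:ℝ) < 64^4 by norm_num), div_lt_one (by norm_num)]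
  exact lt_of_le_of_lt h (by norm_num)

lemma one_sub_isUnit (c : ℝ) (hc : |c| < 1) (L : XX →L[ℝ] XX) (hL : ‖L‖ ≤ 1) :
    IsUnit (1 - c • L) := by
  apply isUnit_one_sub_of_norm_lt_one
  rw [norm_smul, Real.norm_eq_abs]
  calc |c| * ‖L‖ ≤ |c| * 1 := by gcongr
    _ < 1 := by linarith

lemma LzX_norm : ‖LzX‖ ≤ 1 := liftX_norm_le _ _ zero_le_one _
lemma LyX_norm : ‖LyX‖ ≤ 1 := liftX_norm_le _ _ zero_le_one _

lemma inv_contDiffAt (L : XX →L[ℝ] XX) (hL : ‖L‖ ≤ 1) (g : ℝ × ℝ → ℝ)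
    (hg : ContDiff ℝ (⊤ : ℕ∞) g) (hg1 : ∀ p, |g p| < 1) :
    ContDiff ℝ (⊤ : ℕ∞) (fun p => Ring.inverse (1 - g p • L)) := by
  rw [contDiff_iff_contDiffAt]
  intro p
  obtain ⟨w, hw⟩ := one_sub_isUnit (g p) (hg1 p) L hL
  have h1 : ContDiffAt ℝ (⊤ : ℕ∞) (Ring.inverse : (XX →L[ℝ] XX) → _) (1 - g p • L) := by
    rw [← hw]; exact contDiffAt_ringInverse ℝ w
  refine ContDiffAt.comp (g := Ring.inverse) (f := fun p => 1 - g p • L) p h1 ?_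
  exact (contDiff_const.sub (hg.smul contDiff_const)).contDiffAt

lemma evX_formula (θ φ : ℝ) :
    evX θ φ = (ev00.comp (Ring.inverse (1 - (uu θ φ ^ 2/64^4) • LyX))).comp
      (Ring.inverse (1 - (Real.cos θ/64) • LzX)) := by
  have hz : |Real.cos θ/64| < 1 := by
    rw [abs_div]; have := Real.abs_cos_le_one θ; norm_num; linarith
  have hy : |uu θ φ ^ 2/64^4| < 1 := by
    have := yy_abs θ φ
    exact yy_small _ this
  have u1 := one_sub_isUnit _ hz LzX LzX_norm
  have u2 := one_sub_isUnit _ hy LyX LyX_norm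
  have e1 : (evX θ φ).comp (1 - (Real.cos θ/64) • LzX) = evy (uu θ φ ^ 2) (yy_abs θ φ) := by
    apply XX_ext
    rintro ⟨j, k⟩
    simp only [ContinuousLinearMap.comp_apply, sub_apply,
      one_apply_eq_self, smul_apply, map_sub, map_smul, LzX,
      evy, liftX_ee, evX_ee]
    rcases j with _ | j
    · simp
    · simp [evX_ee]; ring
  have e2 : (evy (uu θ φ ^ 2) (yy_abs θ φ)).comp (1 - (uu θ φ ^ 2/64^4) • LyX) = ev00 := by
    apply XX_ext
    rintro ⟨j, k⟩
    simp only [ContinuousLinearMap.comp_apply, sub_apply,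
      one_apply_eq_self, smul_apply, map_sub, map_smul, LyX,
      evy, liftX_ee, ev00]
    rcases k with _ | k
    · simp
    · by_cases hj : j = 0
      · simp [liftX_ee, hj]; ring
      · simp [liftX_ee, hj]
  have i1 := Ring.mul_inverse_cancel _ u1
  have i2 := Ring.mul_inverse_cancel _ u2
  have h3 : evy (uu θ φ ^ 2) (yy_abs θ φ) =
      ev00.comp (Ring.inverse (1 - (uu θ φ ^ 2/64^4) • LyX)) := by
    rw [← e2, ContinuousLinearMap.comp_assoc, ← ContinuousLinearMap.mul_def, i2]; rfl
  rw [← h3, ← e1, ContinuousLinearMap.comp_assoc, ← ContinuousLinearMap.mul_def, i1]; rfl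

lemma uu_contDiff : ContDiff ℝ (⊤ : ℕ∞) (fun p : ℝ × ℝ => uu p.1 p.2) := by
  unfold uu
  fun_prop

lemma evX_contDiff : ContDiff ℝ (⊤ : ℕ∞) (fun p : ℝ × ℝ => evX p.1 p.2) := by
  simp only [evX_formula]
  refine ContDiff.clm_comp (ContDiff.clm_comp contDiff_const ?_) ?_
  · apply inv_contDiffAt _ LyX_norm
    · exact (uu_contDiff.pow 2).div_const _
    · intro p
      have := yy_abs p.1 p.2
      exact yy_small _ this
  · apply inv_contDiffAt _ LzX_norm (fun p => Real.cos p.1/64)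
    · fun_prop
    · intro p
      rw [abs_div]; have := Real.abs_cos_le_one p.1; norm_num; linarith

abbrev ZZ : Type := XX × XX

def VV (θ φ : ℝ) : ZZ →L[ℝ] ℝ :=
  (evX θ φ).comp (ContinuousLinearMap.fst ℝ XX XX) +
    uu θ φ • (evX θ φ).comp (ContinuousLinearMap.snd ℝ XX XX)

lemma VV_apply (θ φ : ℝ) (a : ZZ) : VV θ φ a = evX θ φ a.1 + uu θ φ * evX θ φ a.2 := by
  simp [VV]

lemma VV_contDiff : ContDiff ℝ (⊤ : ℕ∞) (fun p : ℝ × ℝ => VV p.1 p.2) := by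
  unfold VV
  have h := evX_contDiff
  have h2 := uu_contDiff
  refine ContDiff.add (h.clm_comp contDiff_const) (h2.smul (h.clm_comp contDiff_const))

lemma VV_periodic (θ φ : ℝ) : VV θ (φ + 2 * Real.pi) = VV θ φ := by
  have : uu θ (φ + 2 * Real.pi) = uu θ φ := by
    unfold uu
    rw [show 2 * (φ + 2 * Real.pi) = 2 * φ + 2 * Real.pi + 2 * Real.pi by ring,
      Real.cos_add_two_pi, Real.cos_add_two_pi]
  have h2 : evX θ (φ + 2 * Real.pi) = evX θ φ := by
    apply XX_ext; intro i; rw [evX_ee, evX_ee, this]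
  simp only [VV, this, h2]

/-- the function on the sphere -/
def FF (a : ZZ) : SphereFun := fun θ φ => VV θ φ a

lemma FF_smooth (a : ZZ) : SphSmooth (FF a) := by
  unfold SphSmooth FF
  exact VV_contDiff.clm_apply contDiff_const

lemma FF_periodic (a : ZZ) : PeriodicPhi (FF a) := by
  intro θ φ; unfold FF; rw [VV_periodic]

/-- the Laplacian as a functional -/
lemma lap_exists (θ φ : ℝ) : ∃ Λ : ZZ →L[ℝ] ℝ, ∀ a, lapS (FF a) θ φ = Λ a := by
  have hθ : ∀ φ, ContDiff ℝ (⊤ : ℕ∞) (fun t => VV t φ) := fun φ =>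
    VV_contDiff.comp (f := fun t : ℝ => (t, φ)) (by fun_prop)
  have hφ : ContDiff ℝ (⊤ : ℕ∞) (fun p => VV θ p) :=
    VV_contDiff.comp (f := fun t : ℝ => (θ, t)) (by fun_prop)
  have dap : ∀ (f : ℝ → ZZ →L[ℝ] ℝ) (hf : Differentiable ℝ f) (a : ZZ),
      deriv (fun t => f t a) = fun t => deriv f t a := by
    intro f hf a
    ext t
    have := ((hf t).hasDerivAt.clm_apply (hasDerivAt_const t a)).deriv
    simpa using this
  have d1 : ContDiff ℝ (⊤ : ℕ∞) (deriv (fun t => VV t φ)) :=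
    (contDiff_infty_iff_deriv.1 (hθ φ)).2
  have d2 : ContDiff ℝ (⊤ : ℕ∞) (deriv (fun p => VV θ p)) :=
    (contDiff_infty_iff_deriv.1 hφ).2
  refine ⟨(1 / Real.sin θ) • deriv (fun t => Real.sin t • deriv (fun t => VV t φ) t) θ
    + (1 / (Real.sin θ)^2) • deriv (deriv (fun p => VV θ p)) φ, ?_⟩
  intro a
  unfold lapS dTheta dPhi FF
  have e1 : (fun t => Real.sin t * deriv (fun t => VV t φ a) t) =
      fun t => (Real.sin t • deriv (fun t => VV t φ) t) a := by
    rw [dap _ ((hθ φ).differentiable (by simp))]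
    ext t; simp
  have e2 : (fun p => deriv (fun p => VV θ p a) p) = fun p => deriv (fun p => VV θ p) p a := by
    rw [dap _ (hφ.differentiable (by simp))]
  rw [e1, e2, dap _ _, dap _ (d2.differentiable (by simp))]
  · simp
  · exact (Real.contDiff_sin.smul d1).differentiable (by simp)

def LamX (θ φ : ℝ) : ZZ →L[ℝ] ℝ := Classical.choose (lap_exists θ φ)

lemma LamX_spec (θ φ : ℝ) (a : ZZ) : lapS (FF a) θ φ = LamX θ φ a :=
  Classical.choose_spec (lap_exists θ φ) a

/-! ### Part 3: the Laplacian on monomials -/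

lemma lap_mono (j K : ℕ) (θ φ : ℝ) (hθ : θ ∈ Set.Ioo (0:ℝ) Real.pi) :
    lapS (fun θ φ => Real.cos θ ^ j * uu θ φ ^ K) θ φ =
      (j:ℝ) * ((j:ℝ) - 1) * (Real.cos θ ^ (j - 2) * uu θ φ ^ K)
      + 4 * (K:ℝ) * ((K:ℝ) - 1) * (Real.cos θ ^ j * uu θ φ ^ (K - 2)) * (1 - Real.cos θ ^ 2)
      - ((j:ℝ) + 2 * K) * ((j:ℝ) + 2 * K + 1) * (Real.cos θ ^ j * uu θ φ ^ K) := by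
  have hs : Real.sin θ ≠ 0 := (Real.sin_pos_of_pos_of_lt_pi hθ.1 hθ.2).ne'
  have hsc : Real.sin θ ^ 2 = 1 - Real.cos θ ^ 2 := Real.sin_sq θ
  unfold lapS dTheta dPhi
  have e1 : (fun t => Real.sin t * deriv (fun t => Real.cos t ^ j * uu t φ ^ K) t) =
      fun t => Real.cos (2 * φ) ^ K * (-(j:ℝ) * (Real.cos t ^ (j-1) * Real.sin t ^ (2*K+2)) +
        2 * K * (Real.sin t ^ (2*K) * Real.cos t ^ (j+1))) := by
    ext t
    have h : HasDerivAt (fun t => Real.cos t ^ j * uu t φ ^ K)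
        (((j:ℝ) * Real.cos t ^ (j-1) * (-Real.sin t)) * uu t φ ^ K
         + Real.cos t ^ j * ((K:ℝ) * uu t φ ^ (K-1) * ((((2:ℕ):ℝ) * Real.sin t ^ (2-1) * Real.cos t) * Real.cos (2*φ)))) t := by
      have h1 := (Real.hasDerivAt_cos t).fun_pow j
      have h2 := ((((Real.hasDerivAt_sin t).fun_pow 2).mul_const (Real.cos (2*φ))).fun_pow K)
      exact h1.mul h2
    rw [h.deriv]
    unfold uu
    rcases K with _ | K
    · simp; ring
    · simp only [mul_pow, Nat.add_sub_cancel, Nat.cast_add, Nat.cast_one, Nat.cast_ofNat,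
        ← pow_mul]
      ring
  have e2 : ∀ p, deriv (fun p => Real.cos θ ^ j * uu θ p ^ K) p =
      Real.cos θ ^ j * Real.sin θ ^ (2*K) * (-2 * K) * (Real.cos (2*p) ^ (K-1) * Real.sin (2*p)) := by
    intro p
    have hc : HasDerivAt (fun p : ℝ => Real.cos (2*p)) (-Real.sin (2*p) * (2 * 1)) p :=
      ((hasDerivAt_id p).const_mul 2).cos
    have h := ((hc.const_mul (Real.sin θ ^ 2)).fun_pow K).const_mul (Real.cos θ ^ j)
    change HasDerivAt (fun p => Real.cos θ ^ j * uu θ p ^ K) _ p at h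
    rw [h.deriv]
    rcases K with _ | K
    · simp
    · simp only [mul_pow, Nat.add_sub_cancel, Nat.cast_add, Nat.cast_one, ← pow_mul]
      ring
  rw [e1]
  simp only [e2]
  have h3 : HasDerivAt (fun t => Real.cos (2 * φ) ^ K * (-(j:ℝ) * (Real.cos t ^ (j-1) * Real.sin t ^ (2*K+2)) +
        2 * K * (Real.sin t ^ (2*K) * Real.cos t ^ (j+1)))) (Real.cos (2 * φ) ^ K *
        (-(j:ℝ) * ((((j-1 : ℕ):ℝ) * Real.cos θ ^ (j-1-1) * (-Real.sin θ)) * Real.sin θ ^ (2*K+2)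
          + Real.cos θ ^ (j-1) * (((2*K+2 : ℕ):ℝ) * Real.sin θ ^ (2*K+2-1) * Real.cos θ)) +
        2 * K * ((((2*K : ℕ):ℝ) * Real.sin θ ^ (2*K-1) * Real.cos θ) * Real.cos θ ^ (j+1)
          + Real.sin θ ^ (2*K) * (((j+1 : ℕ):ℝ) * Real.cos θ ^ (j+1-1) * (-Real.sin θ))))) θ := by
    refine HasDerivAt.const_mul _ (HasDerivAt.add (HasDerivAt.const_mul _ ?_) (HasDerivAt.const_mul _ ?_))
    · exact ((Real.hasDerivAt_cos θ).fun_pow _).mul ((Real.hasDerivAt_sin θ).fun_pow _)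
    · exact ((Real.hasDerivAt_sin θ).fun_pow _).mul ((Real.hasDerivAt_cos θ).fun_pow _)
  rw [h3.deriv]
  have h4 : HasDerivAt (fun p => Real.cos θ ^ j * Real.sin θ ^ (2*K) * (-2 * K) * (Real.cos (2*p) ^ (K-1) * Real.sin (2*p)))
      (Real.cos θ ^ j * Real.sin θ ^ (2*K) * (-2 * K) *
        ((((K-1 : ℕ) : ℝ) * Real.cos (2*φ) ^ (K-1-1) * (-Real.sin (2*φ) * (2 * 1))) * Real.sin (2*φ)
        + Real.cos (2*φ) ^ (K-1) * (Real.cos (2*φ) * (2*1)))) φ := by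
    have hc : HasDerivAt (fun p : ℝ => Real.cos (2*p)) (-Real.sin (2*φ) * (2 * 1)) φ :=
      ((hasDerivAt_id φ).const_mul 2).cos
    have hS : HasDerivAt (fun p : ℝ => Real.sin (2*p)) (Real.cos (2*φ) * (2 * 1)) φ :=
      ((hasDerivAt_id φ).const_mul 2).sin
    exact ((hc.fun_pow _).mul hS).const_mul _
  rw [h4.deriv]
  have hS2 : Real.sin (2*φ) ^ 2 = 1 - Real.cos (2*φ) ^ 2 := Real.sin_sq _
  unfold uu
  generalize Real.sin (2*φ) = S at *
  generalize Real.cos (2*φ) = C at *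
  generalize Real.sin θ = s at *
  generalize Real.cos θ = c at *
  clear e1 e2 h3 h4
  have key : ∀ a b : ℝ, s^2 * a = s^2 * b → a = b := fun a b h =>
    mul_left_cancel₀ (pow_ne_zero 2 hs) h
  apply key
  have f1 : (j:ℝ) * c^(j-1) * c = j * c^j := by
    rcases j with _ | j
    · simp
    · rw [Nat.add_sub_cancel]; ring
  have f2 : (j:ℝ) * ((j-1:ℕ):ℝ) * c^(j-1-1) = j * (j-1) * c^(j-2) := by
    rcases j with _ | j
    · simp
    · rw [Nat.add_sub_cancel]; push_cast; ring
  have f7 : (j:ℝ) * (j-1) * c^(j-2) * c^2 = j * (j-1) * c^j := by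
    rcases j with _ | _ | j
    · simp
    · simp
    · rw [show j + 1 + 1 - 2 = j by omega]; ring
  have f3 : (K:ℝ) * s^(2*K-1) * s = K * s^(2*K) := by
    rcases K with _ | K
    · simp
    · rw [show 2 * (K+1) - 1 = 2*K+1 by omega]; ring
  have f4 : (K:ℝ) * C^(K-1) * C = K * C^K := by
    rcases K with _ | K
    · simp
    · rw [Nat.add_sub_cancel]; ring
  have f5 : (K:ℝ) * ((K-1:ℕ):ℝ) * C^(K-1-1) = K * (K-1) * C^(K-2) := by
    rcases K with _ | K
    · simp
    · rw [Nat.add_sub_cancel]; push_cast; ring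
  have f8 : (K:ℝ) * (K-1) * C^(K-2) * C^2 = K * (K-1) * C^K := by
    rcases K with _ | _ | K
    · simp
    · simp
    · rw [show K + 1 + 1 - 2 = K by omega]; ring
  have f6 : (K:ℝ) * (K-1) * (s^2 * C)^(K-2) * s^4 = K * (K-1) * C^(K-2) * s^(2*K) := by
    rcases K with _ | _ | K
    · simp
    · simp
    · rw [show K + 1 + 1 - 2 = K by omega]; ring
  have hc2 : 1 - c^2 = s^2 := hsc.symm
  rw [hc2, show (s^2*C)^K = s^(2*K) * C^K by ring, show 2*K+2-1 = 2*K+1 by omega,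
    Nat.add_sub_cancel]
  generalize (s^2*C)^(K-2) = B6 at *
  have fin : s^2 * (1 / s * (C ^ K * (-(j:ℝ) * ((((j-1 : ℕ):ℝ) * c ^ (j-1-1) * (-s)) * s ^ (2*K+2)
          + c ^ (j-1) * (((2*K+2 : ℕ):ℝ) * s ^ (2*K+1) * c)) +
        2 * K * ((((2*K : ℕ):ℝ) * s ^ (2*K-1) * c) * c ^ (j+1)
          + s ^ (2*K) * (((j+1 : ℕ):ℝ) * c ^ j * (-s))))) +
      1 / s^2 * (c ^ j * s ^ (2*K) * (-2 * K) *
        ((((K-1 : ℕ) : ℝ) * C ^ (K-1-1) * (-S * (2 * 1))) * S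
        + C ^ (K-1) * (C * (2*1))))) =
      s * ((C ^ K * (((j:ℝ) * ((j-1 : ℕ):ℝ) * c ^ (j-1-1)) * s * (s ^ (2*K) * s^2)
          - ((j:ℝ) * c ^ (j-1) * c) * ((2*K+2) * (s ^ (2*K) * s))) +
        C^K * (4 * K * ((K * s ^ (2*K-1) * c) * (c ^ j * c))
          - 2 * K * s ^ (2*K) * ((j+1) * c ^ j * s)))) +
       (c ^ j * s ^ (2*K)) *
        ((4 * ((K:ℝ) * ((K-1 : ℕ) : ℝ) * C ^ (K-1-1))) * S^2
        - 4 * (K * C ^ (K-1) * C)) := by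
    field_simp
    push_cast
    ring
  rw [fin, f1, f2, f4, f5, hS2]
  generalize hA : (j:ℝ) * (j-1) * c^(j-2) = A at *
  generalize hB : (K:ℝ) * (K-1) * C^(K-2) = B at *
  generalize s^(2*K) = E at *
  generalize s^(2*K-1) = D at *
  linear_combination (-s^2*E*C^K) * f7 + (4*K*c^2*c^j*C^K) * f3 + (-4*c^j*E) * f8
    + (-4*c^j) * f6 + (A*s^2*E*C^K + 4*K^2*E*c^j*C^K)*hsc - (s^2*E*C^K)*hA

def Emb (p : ℕ) : XX →L[ℝ] ZZ :=
  if p = 0 then ContinuousLinearMap.inl ℝ XX XX else ContinuousLinearMap.inr ℝ XX XX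

lemma VV_Emb (p : ℕ) (hp : p ≤ 1) (θ φ : ℝ) (a : XX) :
    VV θ φ (Emb p a) = uu θ φ ^ p * evX θ φ a := by
  unfold Emb
  interval_cases p <;> simp [VV_apply]

lemma VV_Emb_ee (p : ℕ) (hp : p ≤ 1) (θ φ : ℝ) (j k : ℕ) :
    VV θ φ (Emb p (ee (j, k))) = (1/64)^(j+4*k) * (Real.cos θ ^ j * uu θ φ ^ (2*k+p)) := by
  rw [VV_Emb p hp, evX_ee]
  have h6 : (1/64:ℝ)^j = 1/64^j := by rw [div_pow, one_pow]
  have h4 : (1/64:ℝ)^(4*k) = 1/64^(4*k) := by rw [div_pow, one_pow]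
  have h7 : ((64:ℝ)^4)^k = 64^(4*k) := by rw [← pow_mul]
  have h5 : (uu θ φ ^ 2) ^ k = uu θ φ ^ (2 * k) := by rw [← pow_mul]
  show uu θ φ ^ p * ((Real.cos θ/64)^j * (uu θ φ ^ 2/64^4)^k) = _
  rw [div_pow, div_pow, h5, h7, pow_add, pow_add, h6, h4]
  generalize (64:ℝ)^(4*k) = A
  generalize (64:ℝ)^j = B
  ring

def cA (j : ℕ) : ℝ := (j:ℝ) * ((j:ℝ) - 1) / 64^2
def cB (p k : ℕ) : ℝ := 4 * ((2*k+p : ℕ):ℝ) * (((2*k+p : ℕ):ℝ) - 1) / 64^4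
def cN (p k j : ℕ) : ℝ := ((j+4*k+2*p : ℕ):ℝ) * (((j+4*k+2*p : ℕ):ℝ) + 1)

lemma lap_basis (p : ℕ) (hp : p ≤ 1) (θ φ : ℝ) (hθ : θ ∈ Set.Ioo (0:ℝ) Real.pi) (j k : ℕ) :
    LamX θ φ (Emb p (ee (j, k))) =
      cA j * VV θ φ (Emb p (ee (j-2, k)))
      + cB p k * (VV θ φ (Emb p (ee (j, k-1))) - 64^2 * VV θ φ (Emb p (ee (j+2, k-1))))
      - cN p k j * VV θ φ (Emb p (ee (j, k))) := by
  have h1 : FF ((64:ℝ)^(j+4*k) • Emb p (ee (j, k))) =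
      fun θ φ => Real.cos θ ^ j * uu θ φ ^ (2*k+p) := by
    ext θ φ
    simp only [FF, map_smul, VV_Emb_ee p hp, smul_eq_mul]
    rw [← mul_assoc, ← mul_pow]; norm_num
  have h2 := LamX_spec θ φ ((64:ℝ)^(j+4*k) • Emb p (ee (j, k)))
  rw [h1, lap_mono _ _ _ _ hθ, map_smul, smul_eq_mul] at h2
  have h64 : (64:ℝ)^(j+4*k) * (1/64)^(j+4*k) = 1 := by rw [← mul_pow]; norm_num
  have h3 : LamX θ φ (Emb p (ee (j, k))) = (1/64)^(j+4*k) * ((64:ℝ)^(j+4*k) * LamX θ φ (Emb p (ee (j, k)))) := by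
    linear_combination (- LamX θ φ (Emb p (ee (j, k)))) * h64
  rw [h3, ← h2]
  simp only [VV_Emb_ee p hp]
  have t1 : cA j * ((1/64:ℝ)^(j-2+4*k) * (Real.cos θ ^ (j-2) * uu θ φ ^ (2*k+p))) =
      (1/64:ℝ)^(j+4*k) * ((j:ℝ) * ((j:ℝ) - 1) * (Real.cos θ ^ (j - 2) * uu θ φ ^ (2*k+p))) := by
    unfold cA
    rcases j with _ | _ | j
    · simp
    · simp
    · rw [show j+1+1-2+4*k = j+4*k by omega, show j+1+1+4*k = j+4*k+2 by omega, pow_add _ (j+4*k)]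
      ring
  have t2 : cB p k * ((1/64:ℝ)^(j+4*(k-1)) * (Real.cos θ ^ j * uu θ φ ^ (2*(k-1)+p)) -
      64^2 * ((1/64:ℝ)^(j+2+4*(k-1)) * (Real.cos θ ^ (j+2) * uu θ φ ^ (2*(k-1)+p)))) =
      (1/64:ℝ)^(j+4*k) * (4 * ((2*k+p:ℕ):ℝ) * (((2*k+p:ℕ):ℝ) - 1) * (Real.cos θ ^ j * uu θ φ ^ (2*k+p - 2)) * (1 - Real.cos θ ^ 2)) := by
    unfold cB
    rcases k with _ | k
    · interval_cases p <;> simp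
    · rw [show 2*(k+1)+p-2 = 2*k+p by omega, show k+1-1 = k by omega,
        show j+4*(k+1) = j+4*k+4 by omega, show j+2+4*k = j+4*k+2 by omega,
        pow_add _ (j+4*k), pow_add _ (j+4*k), pow_add _ j 2]
      ring
  rw [t1, t2]
  unfold cN
  push_cast
  ring

def sS (p k j : ℕ) : XX × ℝ :=
  if j + 4*k + 2*p = 2 then
    ((1/6:ℝ) * cA j) • (if h : 2 ≤ j then sS p k (j-2) else 0) + (0, (1/64)^j)
  else
    (6 - cN p k j)⁻¹ • (((ee (j, k), 0) : XX × ℝ)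
      - cA j • (if h : 2 ≤ j then sS p k (j-2) else 0)
      - cB p k • ((if h : 1 ≤ k then sS p (k-1) j else 0)
        - (64^2:ℝ) • (if h : 1 ≤ k then sS p (k-1) (j+2) else 0)))
termination_by (k, j)
decreasing_by
  all_goals first
    | exact Prod.Lex.right _ (by omega)
    | exact Prod.Lex.left _ _ (by omega)

lemma cA_nonneg (j : ℕ) : 0 ≤ cA j := by
  unfold cA
  rcases j with _ | j
  · simp
  · push_cast
    have : (0:ℝ) ≤ j := by positivity
    rw [show (j:ℝ) + 1 - 1 = j by ring]
    positivity

lemma cB_nonneg (p k : ℕ) : 0 ≤ cB p k := by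
  unfold cB
  generalize 2*k+p = K
  rcases K with _ | j
  · simp
  · push_cast
    have : (0:ℝ) ≤ j := by positivity
    rw [show (j:ℝ) + 1 - 1 = j by ring]
    positivity

lemma sS_norm (p k j : ℕ) : ‖sS p k j‖ ≤ 1 := by
  induction k using Nat.strong_induction_on generalizing j with
  | _ k ihk =>
  induction j using Nat.strong_induction_on with
  | _ j ihj =>
  have g1 : ‖(if h : 2 ≤ j then sS p k (j-2) else 0)‖ ≤ 1 := by
    split_ifs with h
    · exact ihj _ (by omega)
    · simp
  have g2 : ‖(if h : 1 ≤ k then sS p (k-1) j else 0)‖ ≤ 1 := by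
    split_ifs with h
    · exact ihk _ (by omega) _
    · simp
  have g3 : ‖(if h : 1 ≤ k then sS p (k-1) (j+2) else 0)‖ ≤ 1 := by
    split_ifs with h
    · exact ihk _ (by omega) _
    · simp
  have hA := cA_nonneg j
  have hB := cB_nonneg p k
  rw [sS]
  generalize (if h : 2 ≤ j then sS p k (j-2) else 0) = x1 at *
  generalize (if h : 1 ≤ k then sS p (k-1) j else 0) = x2 at *
  generalize (if h : 1 ≤ k then sS p (k-1) (j+2) else 0) = x3 at *
  split_ifs with h
  · have hj : j = 0 ∨ j = 2 := by omega
    rcases hj with rfl | rfl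
    · simp [cA, Prod.norm_def]
    · refine (norm_add_le _ _).trans ?_
      have e : ‖((0, (1/64)^2) : XX × ℝ)‖ = (1/64)^2 := by simp [Prod.norm_def]
      have e2 : (1/6:ℝ) * cA 2 = 1/12288 := by norm_num [cA]
      rw [norm_smul, e, e2, Real.norm_of_nonneg (by norm_num)]
      linarith
  · rw [norm_smul]
    have hnum : ‖((ee (j, k), 0) : XX × ℝ) - cA j • x1 - cB p k • (x2 - (64^2:ℝ) • x3)‖ ≤
        1 + cA j + cB p k * 4097 := by
      refine (norm_sub_le _ _).trans (add_le_add ((norm_sub_le _ _).trans (add_le_add ?_ ?_)) ?_)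
      · simp [Prod.norm_def, norm_ee]
      · rw [norm_smul, Real.norm_of_nonneg hA]; nlinarith
      · rw [norm_smul, Real.norm_of_nonneg hB]
        refine mul_le_mul_of_nonneg_left ((norm_sub_le _ _).trans ?_) hB
        rw [norm_smul]; norm_num; linarith
    rw [norm_inv, Real.norm_eq_abs]
    have hden : 1 + cA j + cB p k * 4097 ≤ |6 - cN p k j| ∧ 0 < |6 - cN p k j| := by
      by_cases h3 : 3 ≤ j + 4*k + 2*p
      · have hj : (j:ℝ) ≤ ((j+4*k+2*p : ℕ):ℝ) := by exact_mod_cast (by omega : j ≤ j+4*k+2*p)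
        have hK : ((2*k+p : ℕ):ℝ) ≤ ((j+4*k+2*p : ℕ):ℝ) := by
          exact_mod_cast (by omega : 2*k+p ≤ j+4*k+2*p)
        have hn : (3:ℝ) ≤ ((j+4*k+2*p : ℕ):ℝ) := by exact_mod_cast h3
        unfold cA cB cN
        have hj0 : (0:ℝ) ≤ j := by positivity
        have hK0 : (0:ℝ) ≤ ((2*k+p : ℕ):ℝ) := by positivity
        generalize ((j+4*k+2*p : ℕ):ℝ) = n at *
        generalize ((2*k+p : ℕ):ℝ) = K at *
        generalize (j:ℝ) = x at *
        have : (6:ℝ) ≤ n*(n+1) - 6 := by nlinarith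
        rw [abs_sub_comm, abs_of_pos (by linarith)]
        constructor
        · have a1 : x*(x-1) ≤ n^2 := by nlinarith
          have a2 : K*(K-1) ≤ n^2 := by nlinarith
          have : 4*K*(K-1) ≤ 4*n^2 := by nlinarith
          nlinarith
        · linarith
      · have hk : k = 0 := by omega
        have hp : p = 0 := by omega
        subst hk hp
        have : j ≤ 1 := by omega
        interval_cases j <;> norm_num [cA, cB, cN]
    rw [inv_mul_le_iff₀ hden.2]
    linarith [hden.1]

def TK (p : ℕ) : XX →L[ℝ] XX × ℝ := liftX (fun i => sS p i.2 i.1) 1 (fun i => sS_norm p i.2 i.1)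

lemma TK_ee (p j k : ℕ) : TK p (ee (j, k)) = sS p k j := liftX_ee _ _ _ _

def NN (p : ℕ) (θ φ : ℝ) : ℝ := if p = 0 then Real.cos θ ^ 2 - 1/3 else uu θ φ

def DD (p : ℕ) (θ φ : ℝ) : XX × ℝ →L[ℝ] ℝ :=
  ((LamX θ φ + (6:ℝ) • VV θ φ).comp (Emb p)).comp (ContinuousLinearMap.fst ℝ XX ℝ)
    + NN p θ φ • ContinuousLinearMap.snd ℝ XX ℝ

lemma DD_sS (p : ℕ) (hp : p ≤ 1) (θ φ : ℝ) (hθ : θ ∈ Set.Ioo (0:ℝ) Real.pi) (k j : ℕ) :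
    DD p θ φ (sS p k j) = VV θ φ (Emb p (ee (j, k))) := by
  induction k using Nat.strong_induction_on generalizing j with
  | _ k ihk =>
  induction j using Nat.strong_induction_on with
  | _ j ihj =>
  have g1 : cA j * DD p θ φ (if h : 2 ≤ j then sS p k (j-2) else 0) = cA j * VV θ φ (Emb p (ee (j-2, k))) := by
    split_ifs with h
    · rw [ihj _ (by omega)]
    · have : j = 0 ∨ j = 1 := by omega
      rcases this with rfl | rfl <;> simp [cA]
  have g2 : cB p k * DD p θ φ (if h : 1 ≤ k then sS p (k-1) j else 0) = cB p k * VV θ φ (Emb p (ee (j, k-1))) := by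
    split_ifs with h
    · rw [ihk _ (by omega) _]
    · have : k = 0 := by omega
      subst this
      interval_cases p <;> simp [cB]
  have g3 : cB p k * DD p θ φ (if h : 1 ≤ k then sS p (k-1) (j+2) else 0) = cB p k * VV θ φ (Emb p (ee (j+2, k-1))) := by
    split_ifs with h
    · rw [ihk _ (by omega) _]
    · have : k = 0 := by omega
      subst this
      interval_cases p <;> simp [cB]
  rw [sS]
  generalize (if h : 2 ≤ j then sS p k (j-2) else 0) = x1 at *
  generalize (if h : 1 ≤ k then sS p (k-1) j else 0) = x2 at *
  generalize (if h : 1 ≤ k then sS p (k-1) (j+2) else 0) = x3 at *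
  split_ifs with h
  · rw [map_add, map_smul, smul_eq_mul, mul_assoc, g1]
    have : DD p θ φ ((0, (1/64)^j) : XX × ℝ) = NN p θ φ * (1/64)^j := by simp [DD]
    rw [this]
    have : (p = 1 ∧ k = 0 ∧ j = 0) ∨ (p = 0 ∧ k = 0 ∧ j = 2) := by omega
    rcases this with ⟨rfl, rfl, rfl⟩ | ⟨rfl, rfl, rfl⟩
    · simp [cA, VV_Emb_ee, NN]
    · simp [cA, VV_Emb_ee, NN]; ring
  · rw [map_smul, map_sub, map_sub, map_smul, map_smul, map_sub, map_smul]
    simp only [smul_eq_mul]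
    have hb := lap_basis p hp θ φ hθ j k
    have : DD p θ φ ((ee (j, k), 0) : XX × ℝ) = LamX θ φ (Emb p (ee (j, k))) + 6 * VV θ φ (Emb p (ee (j, k))) := by
      simp [DD]
    rw [this, hb]
    have hne : 6 - cN p k j ≠ 0 := by
      unfold cN
      intro h0
      apply h
      generalize j+4*k+2*p = n at *
      have : (n:ℝ) * (n+1) = 6 := by linarith
      have : n * (n+1) = 6 := by exact_mod_cast this
      nlinarith [show n ≤ 2 by nlinarith, show 2 ≤ n by nlinarith]
    rw [inv_mul_eq_iff_eq_mul₀ hne]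
    linear_combination -g1 - g2 + 64^2 * g3

lemma DD_TK (p : ℕ) (hp : p ≤ 1) (θ φ : ℝ) (hθ : θ ∈ Set.Ioo (0:ℝ) Real.pi) (a : XX) :
    DD p θ φ (TK p a) = VV θ φ (Emb p a) := by
  have : (DD p θ φ).comp (TK p) = (VV θ φ).comp (Emb p) := by
    apply XX_ext
    rintro ⟨j, k⟩
    simp only [ContinuousLinearMap.comp_apply, TK_ee, DD_sS p hp θ φ hθ]
  exact congrArg (fun f => f a) this

lemma lap_TK (p : ℕ) (hp : p ≤ 1) (θ φ : ℝ) (hθ : θ ∈ Set.Ioo (0:ℝ) Real.pi) (a : XX)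
    (ha : (TK p a).2 = 0) :
    LamX θ φ (Emb p (TK p a).1) + 6 * VV θ φ (Emb p (TK p a).1) = VV θ φ (Emb p a) := by
  rw [← DD_TK p hp θ φ hθ a]
  simp [DD, ha]

/-! ### Part 4: coefficients -/

def RR (n : ℕ) : Polynomial ℝ := (Polynomial.X ^ 2 - 1) ^ n

def DR (n d : ℕ) : Polynomial ℝ := Polynomial.derivative^[d] (RR n)

lemma iterDeriv_poly (p : Polynomial ℝ) (d : ℕ) :
    iteratedDeriv d (fun x => p.eval x) = fun x => (Polynomial.derivative^[d] p).eval x := by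
  induction d with
  | zero => simp
  | succ d ih =>
    rw [iteratedDeriv_succ, ih]
    ext x
    rw [Polynomial.deriv, Function.iterate_succ_apply']

lemma legP_eq (n : ℕ) : legP n = fun s => (Polynomial.C (1 / ((2:ℝ)^n * (Nat.factorial n : ℝ))) * DR n n).eval s := by
  ext s
  unfold legP DR
  rw [show (fun x : ℝ => (x^2-1)^n) = fun x => (RR n).eval x by ext x; simp [RR], iterDeriv_poly]
  rw [Polynomial.eval_C_mul]

lemma legP_deriv (n m : ℕ) (s : ℝ) : iteratedDeriv m (legP n) s =
    (1 / ((2:ℝ)^n * (Nat.factorial n : ℝ))) * (DR n (n+m)).eval s := by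
  rw [legP_eq, iterDeriv_poly]
  simp only [Polynomial.iterate_derivative_C_mul, Polynomial.eval_C_mul]
  unfold DR
  rw [← Function.iterate_add_apply, add_comm m n]

def kap (n : ℕ) (m : ℤ) : ℝ := (if m = 0 then 1 else Real.sqrt 2) *
  Real.sqrt ((2*(n:ℝ)+1)/(4*Real.pi) *
    ((Nat.factorial (n - m.natAbs) : ℝ) / (Nat.factorial (n + m.natAbs) : ℝ))) *
  (1 / ((2:ℝ)^n * (Nat.factorial n : ℝ)))

def Th (n μ : ℕ) (θ : ℝ) : ℝ := Real.sin θ ^ μ * (DR n (n+μ)).eval (Real.cos θ)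

def tr (m : ℤ) (φ : ℝ) : ℝ := if m < 0 then Real.sin ((m.natAbs:ℝ) * φ) else Real.cos ((m.natAbs:ℝ) * φ)

lemma assoc_eq (n m : ℕ) (θ : ℝ) (h : θ ∈ Set.Icc (0:ℝ) Real.pi) :
    assocLegP n m (Real.cos θ) = (-1)^m * (1 / ((2:ℝ)^n * (Nat.factorial n : ℝ))) * Th n m θ := by
  unfold assocLegP Th
  rw [legP_deriv]
  have hs : 0 ≤ Real.sin θ := Real.sin_nonneg_of_mem_Icc h
  have : (1 - Real.cos θ ^ 2) ^ ((m:ℝ)/2) = Real.sin θ ^ m := by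
    rw [← Real.sin_sq, ← Real.rpow_natCast (Real.sin θ) 2, ← Real.rpow_mul hs,
      ← Real.rpow_natCast (Real.sin θ) m]
    congr 1
    push_cast; ring
  rw [this]
  ring

lemma Ynm_eq (n : ℕ) (m : ℤ) (θ φ : ℝ) (h : θ ∈ Set.Icc (0:ℝ) Real.pi) :
    Ynm n m θ φ = kap n m * Th n m.natAbs θ * tr m φ := by
  unfold Ynm kap tr
  have h1 : ∀ k : ℕ, (-1:ℝ)^k * (-1)^k = 1 := by
    intro k; rw [← mul_pow]; norm_num
  split_ifs with h0 h1' h2 h2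
  · omega
  · subst h0
    have hf : (Nat.factorial n : ℝ) ≠ 0 := by positivity
    simp only [Int.natAbs_zero, Nat.sub_zero, Nat.add_zero, div_self hf, mul_one, one_mul,
      Nat.cast_zero, zero_mul, Real.cos_zero, Th, pow_zero]
    rw [legP_eq]
    simp only [Polynomial.eval_C_mul]
    ring
  · omega
  · rw [assoc_eq _ _ _ h]
    linear_combination (Real.sqrt 2 * Real.sqrt ((2*(n:ℝ)+1)/(4*Real.pi) *
    ((Nat.factorial (n - m.natAbs) : ℝ) / (Nat.factorial (n + m.natAbs) : ℝ))) *
     (1 / ((2:ℝ)^n * (Nat.factorial n : ℝ))) * Th n m.natAbs θ * Real.cos ((m.natAbs:ℝ) * φ)) * h1 m.natAbs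
  · rw [assoc_eq _ _ _ h]
    linear_combination (Real.sqrt 2 * Real.sqrt ((2*(n:ℝ)+1)/(4*Real.pi) *
    ((Nat.factorial (n - m.natAbs) : ℝ) / (Nat.factorial (n + m.natAbs) : ℝ))) *
     (1 / ((2:ℝ)^n * (Nat.factorial n : ℝ))) * Th n m.natAbs θ * Real.sin ((m.natAbs:ℝ) * φ)) * h1 m.natAbs
  · omega

lemma DR_bound (n d : ℕ) (x : ℝ) (hx : |x| ≤ 1) : |(DR n d).eval x| ≤ 2^n * ((2*n).descFactorial d : ℝ) := by
  have e : DR n d = ∑ i ∈ Finset.range (n+1), Polynomial.C ((-1:ℝ)^(n-i) * (n.choose i : ℝ)) *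
      (Polynomial.C (((2*i).descFactorial d : ℕ) : ℝ) * Polynomial.X ^ (2*i - d)) := by
    unfold DR RR
    rw [sub_eq_add_neg, add_pow, Polynomial.iterate_derivative_sum]
    refine Finset.sum_congr rfl fun i _ => ?_
    rw [← pow_mul, show (Polynomial.X:Polynomial ℝ)^(2*i) * (-1)^(n-i) * (n.choose i : Polynomial ℝ) =
      Polynomial.C ((-1:ℝ)^(n-i) * (n.choose i : ℝ)) * Polynomial.X^(2*i) by
        simp; ring]
    rw [Polynomial.iterate_derivative_C_mul, Polynomial.iterate_derivative_X_pow_eq_C_mul]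
  rw [e, Polynomial.eval_finsetSum]
  refine (Finset.abs_sum_le_sum_abs _ _).trans ?_
  have hs : (2:ℝ)^n = ∑ i ∈ Finset.range (n+1), (n.choose i : ℝ) := by
    exact_mod_cast (Nat.sum_range_choose n).symm
  rw [hs, Finset.sum_mul]
  refine Finset.sum_le_sum fun i hi => ?_
  simp only [Polynomial.eval_mul, Polynomial.eval_C, Polynomial.eval_pow, Polynomial.eval_X,
    abs_mul, abs_pow, abs_neg, abs_one, one_pow, one_mul, Nat.abs_cast]
  have h1 : |x|^(2*i-d) ≤ 1 := pow_le_one₀ (abs_nonneg _) hx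
  have h2 : ((2*i).descFactorial d : ℝ) ≤ ((2*n).descFactorial d : ℝ) := by
    have : i ≤ n := by simpa [Nat.lt_succ_iff] using hi
    exact_mod_cast Nat.descFactorial_le d (by omega)
  have h3 : (0:ℝ) ≤ ((2*i).descFactorial d : ℝ) := by positivity
  have : ((2*i).descFactorial d : ℝ) * |x|^(2*i-d) ≤ ((2*n).descFactorial d : ℝ) := by nlinarith
  exact mul_le_mul_of_nonneg_left this (by positivity)

lemma Y_bound (n : ℕ) (m : ℤ) (hm : |m| ≤ (n:ℤ)) (θ φ : ℝ) :
    |kap n m * Th n m.natAbs θ * tr m φ| ≤ 2 * (2*n+1) * 4^n := by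
  have hμ : m.natAbs ≤ n := by
    rw [Int.abs_eq_natAbs] at hm; exact_mod_cast hm
  have htr : |tr m φ| ≤ 1 := by
    unfold tr; split_ifs
    · exact Real.abs_sin_le_one _
    · exact Real.abs_cos_le_one _
  have hTh : |Th n m.natAbs θ| ≤ 2^n * ((2*n).descFactorial (n+m.natAbs) : ℝ) := by
    unfold Th
    rw [abs_mul, abs_pow]
    have h1 := pow_le_one₀ (n := m.natAbs) (abs_nonneg _) (Real.abs_sin_le_one θ)
    have h2 := DR_bound n (n+m.natAbs) _ (Real.abs_cos_le_one θ)
    calc _ ≤ 1 * |(DR n (n+m.natAbs)).eval (Real.cos θ)| :=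
          mul_le_mul_of_nonneg_right h1 (abs_nonneg _)
      _ ≤ _ := by rw [one_mul]; exact h2
  obtain ⟨μ, hμe⟩ : ∃ μ, m.natAbs = μ := ⟨_, rfl⟩
  rw [hμe] at hμ hTh ⊢
  set A : ℝ := (Nat.factorial (n-μ) : ℝ)
  set B : ℝ := (Nat.factorial (n+μ) : ℝ)
  set N : ℝ := (Nat.factorial n : ℝ)
  have hA : 0 < A := by positivity
  have hB : 0 < B := by positivity
  have hN : 0 < N := by positivity
  have hdf : A * ((2*n).descFactorial (n+μ) : ℝ) = ((2*n).factorial : ℝ) := by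
    have := Nat.factorial_mul_descFactorial (n := 2*n) (k := n+μ) (by omega)
    rw [show 2*n-(n+μ) = n-μ by omega] at this
    simp only [A]; exact_mod_cast this
  have hcb : ((2*n).factorial : ℝ) ≤ 4^n * (N*N) := by
    have h1 := Nat.choose_mul_factorial_mul_factorial (n := 2*n) (k := n) (by omega)
    rw [show 2*n-n = n by omega, ← Nat.centralBinom_eq_two_mul_choose] at h1
    have h2 : (n.centralBinom : ℝ) ≤ 4^n := by exact_mod_cast Nat.centralBinom_le_four_pow n
    have h3 : (n.centralBinom : ℝ) * N * N = ((2*n).factorial : ℝ) := by simp only [N]; exact_mod_cast h1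
    rw [← h3, mul_assoc]
    exact mul_le_mul_of_nonneg_right h2 (by positivity)
  have hAB : N*N ≤ A*B := by
    have h1 := Nat.choose_mul_factorial_mul_factorial (n := 2*n) (k := n+μ) (by omega)
    have h2 := Nat.choose_mul_factorial_mul_factorial (n := 2*n) (k := n) (by omega)
    rw [show 2*n-n = n by omega, ← Nat.centralBinom_eq_two_mul_choose] at h2
    rw [show 2*n-(n+μ) = n-μ by omega, ← h2] at h1
    have h3 := Nat.choose_le_centralBinom (n+μ) n
    have hc : 0 < n.centralBinom := Nat.centralBinom_pos n
    have : n.centralBinom * (n.factorial * n.factorial) ≤ n.centralBinom * ((n-μ).factorial * (n+μ).factorial) := by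
      calc n.centralBinom * (n.factorial * n.factorial) = (2*n).choose (n+μ) * (n-μ).factorial * (n+μ).factorial := by
            rw [← mul_assoc, ← h1]; ring
        _ ≤ n.centralBinom * (n-μ).factorial * (n+μ).factorial := by gcongr
        _ = _ := by ring
    have := Nat.le_of_mul_le_mul_left this hc
    simp only [N, A, B]; exact_mod_cast this
  have hπ := Real.pi_gt_three
  have hx : Real.sqrt ((2*(n:ℝ)+1)/(4*Real.pi)) ≤ 2*n+1 := by
    apply Real.sqrt_le_iff.2
    have hn : (0:ℝ) ≤ n := by positivity
    refine ⟨by positivity, ?_⟩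
    rw [div_le_iff₀ (by positivity)]
    have : (2*(n:ℝ)+1) ≤ (2*n+1)^2 := by nlinarith
    nlinarith
  have hk : |kap n m| ≤ 2 * (2*n+1) * Real.sqrt (A/B) * (1/(2^n*N)) := by
    unfold kap
    rw [hμe, Real.sqrt_mul (by positivity)]
    have h2 : Real.sqrt 2 ≤ 2 := by
      apply Real.sqrt_le_iff.2; norm_num
    have h3 : |(if m = 0 then 1 else Real.sqrt 2)| ≤ 2 := by
      split_ifs
      · norm_num
      · rw [abs_of_nonneg (Real.sqrt_nonneg _)]; exact h2
    rw [abs_mul, abs_mul, abs_mul, abs_of_nonneg (Real.sqrt_nonneg _), abs_of_nonneg (Real.sqrt_nonneg _),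
      abs_of_nonneg (show (0:ℝ) ≤ 1/(2^n*N) by positivity), ← mul_assoc]
    gcongr
  have hsq : Real.sqrt (A/B) ≤ A/N := by
    apply Real.sqrt_le_iff.2
    refine ⟨by positivity, ?_⟩
    rw [div_pow, div_le_div_iff₀ hB (by positivity)]
    nlinarith
  rw [abs_mul, abs_mul]
  have hd0 : (0:ℝ) ≤ ((2*n).descFactorial (n+μ) : ℝ) := by positivity
  calc |kap n m| * |Th n μ θ| * |tr m φ|
      ≤ (2 * (2*n+1) * (A/N) * (1/(2^n*N))) * (2^n * ((2*n).descFactorial (n+μ) : ℝ)) * 1 := by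
        gcongr
        exact hk.trans (by gcongr)
    _ = 2 * (2*n+1) * ((A * ((2*n).descFactorial (n+μ) : ℝ)) / (N*N)) := by
        field_simp
    _ ≤ 2 * (2*n+1) * 4^n := by
        rw [hdf]
        refine mul_le_mul_of_nonneg_left ?_ (by positivity)
        rw [div_le_iff₀ (by positivity)]
        exact hcb

/-- trigonometric integrals -/
lemma trig_sin (K : ℕ) (m : ℤ) : ∫ φ in (0:ℝ)..(2*Real.pi), Real.cos (2*φ)^K * Real.sin (m*φ) = 0 := by
  induction K generalizing m with
  | zero =>
    simp only [pow_zero, one_mul]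
    rcases eq_or_ne m 0 with rfl | hm
    · simp
    · have : (m:ℝ) ≠ 0 := by exact_mod_cast hm
      rw [intervalIntegral.integral_comp_mul_left (fun x => Real.sin x) this, integral_sin]
      rw [show (m:ℝ) * (2*Real.pi) = m * (2*Real.pi) by rfl, Real.cos_int_mul_two_pi]
      simp
  | succ K ih =>
    have e : ∀ φ : ℝ, Real.cos (2*φ)^(K+1) * Real.sin (m*φ) =
        (1/2) * (Real.cos (2*φ)^K * Real.sin (((m+2:ℤ):ℝ)*φ)) + (1/2) * (Real.cos (2*φ)^K * Real.sin (((m-2:ℤ):ℝ)*φ)) := by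
      intro φ
      push_cast
      rw [show ((m:ℝ)+2)*φ = m*φ+2*φ by ring, show ((m:ℝ)-2)*φ = m*φ-2*φ by ring,
        Real.sin_add, Real.sin_sub]
      ring
    simp only [e]
    rw [intervalIntegral.integral_add (by apply Continuous.intervalIntegrable; fun_prop)
      (by apply Continuous.intervalIntegrable; fun_prop), intervalIntegral.integral_const_mul,
      intervalIntegral.integral_const_mul, ih, ih]
    simp

lemma trig_cos (K : ℕ) (m : ℤ) (h : ∀ i : ℕ, i ≤ K → m ≠ 4*i - 2*K) :
    ∫ φ in (0:ℝ)..(2*Real.pi), Real.cos (2*φ)^K * Real.cos (m*φ) = 0 := by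
  induction K generalizing m with
  | zero =>
    simp only [pow_zero, one_mul]
    have hm : m ≠ 0 := by simpa using h 0 le_rfl
    have : (m:ℝ) ≠ 0 := by exact_mod_cast hm
    rw [intervalIntegral.integral_comp_mul_left (fun x => Real.cos x) this, integral_cos]
    have := Real.sin_int_mul_pi (2*m)
    push_cast at this
    rw [show (m:ℝ) * (2*Real.pi) = 2 * m * Real.pi by ring, this]
    simp
  | succ K ih =>
    have e : ∀ φ : ℝ, Real.cos (2*φ)^(K+1) * Real.cos (m*φ) =
        (1/2) * (Real.cos (2*φ)^K * Real.cos (((m+2:ℤ):ℝ)*φ)) + (1/2) * (Real.cos (2*φ)^K * Real.cos (((m-2:ℤ):ℝ)*φ)) := by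
      intro φ
      push_cast
      rw [show ((m:ℝ)+2)*φ = m*φ+2*φ by ring, show ((m:ℝ)-2)*φ = m*φ-2*φ by ring,
        Real.cos_add, Real.cos_sub]
      ring
    simp only [e]
    rw [intervalIntegral.integral_add (by apply Continuous.intervalIntegrable; fun_prop)
      (by apply Continuous.intervalIntegrable; fun_prop), intervalIntegral.integral_const_mul,
      intervalIntegral.integral_const_mul, ih, ih]
    · simp
    · intro i hi; have := h (i+1) (by omega); push_cast at this; omega
    · intro i hi; have := h i (by omega); push_cast at this; omega

lemma poly_ibp (q R : Polynomial ℝ) (N : ℕ)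
    (h1 : ∀ i, i < N → (Polynomial.derivative^[i] q).eval 1 * (Polynomial.derivative^[N-1-i] R).eval 1 = 0)
    (h2 : ∀ i, i < N → (Polynomial.derivative^[i] q).eval (-1) * (Polynomial.derivative^[N-1-i] R).eval (-1) = 0)
    (hd : q.natDegree < N) :
    ∫ x in (-1:ℝ)..1, q.eval x * (Polynomial.derivative^[N] R).eval x = 0 := by
  have key : ∀ i, i ≤ N → ∫ x in (-1:ℝ)..1, q.eval x * (Polynomial.derivative^[N] R).eval x =
      (-1)^i * ∫ x in (-1:ℝ)..1, (Polynomial.derivative^[i] q).eval x * (Polynomial.derivative^[N-i] R).eval x := by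
    intro i
    induction i with
    | zero => intro _; simp
    | succ i ih =>
      intro hi
      rw [ih (by omega)]
      have e : N - i = (N-1-i)+1 := by omega
      have := intervalIntegral.integral_mul_deriv_eq_deriv_mul (a := -1) (b := 1)
        (u := fun x => (Polynomial.derivative^[i] q).eval x)
        (v := fun x => (Polynomial.derivative^[N-1-i] R).eval x)
        (u' := fun x => (Polynomial.derivative^[i+1] q).eval x)
        (v' := fun x => (Polynomial.derivative^[N-i] R).eval x)
        (fun x _ => by
          rw [Function.iterate_succ_apply']; exact Polynomial.hasDerivAt _ _)
        (fun x _ => by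
          rw [e, Function.iterate_succ_apply']; exact Polynomial.hasDerivAt _ _)
        (by apply Continuous.intervalIntegrable; fun_prop)
        (by apply Continuous.intervalIntegrable; fun_prop)
      rw [this, h1 i (by omega), h2 i (by omega), show N - (i+1) = N-1-i by omega]
      ring
  rw [key N le_rfl, Polynomial.iterate_derivative_eq_zero hd]
  simp

lemma leg_vanish (n μ j K : ℕ) (hμ : μ ≤ K) (hn : j + 2*K < n) :
    ∫ x in (-1:ℝ)..1, (x^j * (1-x^2)^(K+μ)) * (DR n (n+2*μ)).eval x = 0 := by
  have := poly_ibp (Polynomial.X^j * (1 - Polynomial.X^2)^(K+μ)) (RR n) (n+2*μ) ?_ ?_ ?_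
  · simpa [DR] using this
  all_goals
    have gq : ∀ i, i < K+μ → ∀ x : ℝ, x^2 = 1 → (Polynomial.derivative^[i] (Polynomial.X^j * (1 - Polynomial.X^2)^(K+μ))).eval x = 0 := by
      intro i hi x hx
      have hdv : ((1 - Polynomial.X^2 : Polynomial ℝ))^(K+μ) ∣ Polynomial.X^j * (1 - Polynomial.X^2)^(K+μ) := dvd_mul_left _ _
      obtain ⟨r, hr⟩ := Polynomial.pow_sub_dvd_iterate_derivative_of_pow_dvd i hdv
      rw [hr]
      have : K + μ - i ≠ 0 := by omega
      simp [hx, this]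
    have gR : ∀ i, i < n → ∀ x : ℝ, x^2 = 1 → (Polynomial.derivative^[i] (RR n)).eval x = 0 := by
      intro i hi x hx
      unfold RR
      obtain ⟨r, hr⟩ := Polynomial.pow_sub_dvd_iterate_derivative_pow ((Polynomial.X^2 - 1 : Polynomial ℝ)) n i
      rw [hr]
      have : n - i ≠ 0 := by omega
      simp [hx, this]
  · intro i hi
    by_cases h : i < K + μ
    · rw [gq i h 1 (by norm_num), zero_mul]
    · rw [gR _ (by omega) 1 (by norm_num), mul_zero]
  · intro i hi
    by_cases h : i < K + μ
    · rw [gq i h (-1) (by norm_num), zero_mul]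
    · rw [gR _ (by omega) (-1) (by norm_num), mul_zero]
  · have : (Polynomial.X^j * (1 - Polynomial.X^2 : Polynomial ℝ)^(K+μ)).natDegree ≤ j + (K+μ)*2 := by
      compute_degree
    omega

lemma theta_sub (g : ℝ → ℝ) (hg : Continuous g) :
    ∫ θ in (0:ℝ)..Real.pi, g (Real.cos θ) * Real.sin θ = ∫ x in (-1:ℝ)..1, g x := by
  have := intervalIntegral.integral_comp_mul_deriv (a := 0) (b := Real.pi) (f := Real.cos)
    (f' := fun x => - Real.sin x) (g := g) (fun x _ => Real.hasDerivAt_cos x) (by fun_prop) hg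
  rw [Real.cos_zero, Real.cos_pi, intervalIntegral.integral_symm (-1) 1] at this
  simp only [Function.comp, mul_neg, intervalIntegral.integral_neg] at this
  linarith

/-! ### Part 5: coefficient functionals -/

def wY (n : ℕ) (m : ℤ) (θ φ : ℝ) : ℝ := kap n m * Th n m.natAbs θ * tr m φ * Real.sin θ

lemma tr_cont (m : ℤ) : Continuous (tr m) := by
  unfold tr; split_ifs <;> fun_prop

lemma Th_cont (n μ : ℕ) : Continuous (Th n μ) := by
  unfold Th
  exact (Real.continuous_sin.pow _).mul ((DR n (n+μ)).continuous.comp Real.continuous_cos)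

lemma dbl_cont {E : Type*} [NormedAddCommGroup E] [NormedSpace ℝ E] (V : ℝ → ℝ → E)
    (hV : Continuous (fun p : ℝ × ℝ => V p.1 p.2)) (w : ℝ → ℝ → ℝ)
    (hw : Continuous (fun p : ℝ × ℝ => w p.1 p.2)) :
    Continuous (Function.uncurry fun φ θ : ℝ => w θ φ • V θ φ) := by
  have h1 : Continuous (fun p : ℝ × ℝ => V p.2 p.1) := hV.comp continuous_swap
  have h2 : Continuous (fun p : ℝ × ℝ => w p.2 p.1) := hw.comp continuous_swap
  exact h2.smul h1

lemma dbl_apply {E : Type*} [NormedAddCommGroup E] [NormedSpace ℝ E] (f : ℝ → ℝ → E →L[ℝ] ℝ)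
    (hc : Continuous (Function.uncurry f)) (A B : ℝ) (a : E) :
    (∫ φ in (0:ℝ)..A, ∫ θ in (0:ℝ)..B, f φ θ) a = ∫ φ in (0:ℝ)..A, ∫ θ in (0:ℝ)..B, f φ θ a := by
  rw [ContinuousLinearMap.intervalIntegral_apply]
  · refine intervalIntegral.integral_congr fun φ _ => ?_
    show (∫ θ in (0:ℝ)..B, f φ θ) a = _
    rw [ContinuousLinearMap.intervalIntegral_apply]
    apply Continuous.intervalIntegrable
    exact hc.comp (Continuous.prodMk_right φ)
  · apply Continuous.intervalIntegrable
    exact intervalIntegral.continuous_parametric_intervalIntegral_of_continuous' hc 0 B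

lemma wY_cont (n : ℕ) (m : ℤ) : Continuous (fun p : ℝ × ℝ => wY n m p.1 p.2) := by
  have h1 := tr_cont m
  have h2 := Th_cont n m.natAbs
  unfold wY
  fun_prop

def CF (n : ℕ) (m : ℤ) : ZZ →L[ℝ] ℝ :=
  ∫ φ in (0:ℝ)..(2*Real.pi), ∫ θ in (0:ℝ)..Real.pi, wY n m θ φ • VV θ φ

lemma CF_apply (n : ℕ) (m : ℤ) (a : ZZ) : CF n m a =
    ∫ φ in (0:ℝ)..(2*Real.pi), ∫ θ in (0:ℝ)..Real.pi, wY n m θ φ * VV θ φ a :=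
  dbl_apply (fun φ θ => wY n m θ φ • VV θ φ)
    (dbl_cont VV VV_contDiff.continuous (wY n m) (wY_cont n m)) _ _ a

lemma coeff_eq (u : SphereFun) (n : ℕ) (m : ℤ) : coeff u n m =
    ∫ φ in (0:ℝ)..(2*Real.pi), ∫ θ in (0:ℝ)..Real.pi, wY n m θ φ * u θ φ := by
  unfold coeff sInner
  refine intervalIntegral.integral_congr fun φ _ => ?_
  refine intervalIntegral.integral_congr fun θ hθ => ?_
  rw [Set.uIcc_of_le Real.pi_pos.le] at hθ
  simp only [wY, Ynm_eq n m θ φ hθ]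
  ring

lemma coeff_FF (a : ZZ) (n : ℕ) (m : ℤ) : coeff (FF a) n m = CF n m a := by
  rw [coeff_eq, CF_apply]; rfl

lemma CF_basis (n : ℕ) (m : ℤ) (p : ℕ) (hp : p ≤ 1) (j k : ℕ) :
    CF n m (Emb p (ee (j, k))) = (1/64)^(j+4*k) * kap n m *
      (∫ φ in (0:ℝ)..(2*Real.pi), Real.cos (2*φ)^(2*k+p) * tr m φ) *
      (∫ θ in (0:ℝ)..Real.pi, Real.cos θ ^ j * Real.sin θ ^ (2*(2*k+p)) * Th n m.natAbs θ * Real.sin θ) := by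
  rw [CF_apply]
  have : ∀ φ, ∫ θ in (0:ℝ)..Real.pi, wY n m θ φ * VV θ φ (Emb p (ee (j, k))) =
      ((1/64)^(j+4*k) * kap n m * (∫ θ in (0:ℝ)..Real.pi, Real.cos θ ^ j * Real.sin θ ^ (2*(2*k+p)) * Th n m.natAbs θ * Real.sin θ))
        * (Real.cos (2*φ)^(2*k+p) * tr m φ) := by
    intro φ
    rw [mul_comm _ (Real.cos (2*φ)^(2*k+p) * tr m φ), ← mul_assoc (Real.cos (2*φ)^(2*k+p) * tr m φ),
      ← intervalIntegral.integral_const_mul]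
    refine intervalIntegral.integral_congr fun θ _ => ?_
    simp only [VV_Emb_ee p hp, wY, uu, mul_pow, ← pow_mul]
    ring
  simp only [this, intervalIntegral.integral_const_mul]
  ring

lemma tr_nonneg (m : ℤ) (hm : 0 ≤ m) (φ : ℝ) : tr m φ = Real.cos (m * φ) := by
  unfold tr
  rw [if_neg (by omega)]
  congr 2
  rw [Nat.cast_natAbs, abs_of_nonneg hm]

lemma trig_zero (K : ℕ) (m : ℤ) (h : m < 0 ∨ ∀ i : ℕ, i ≤ K → m ≠ 4*i - 2*K) :
    ∫ φ in (0:ℝ)..(2*Real.pi), Real.cos (2*φ)^K * tr m φ = 0 := by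
  by_cases hm : m < 0
  · have := trig_sin K m.natAbs
    unfold tr
    simpa [hm] using this
  · have h2 : ∀ i : ℕ, i ≤ K → m ≠ 4*i - 2*K := by tauto
    simp only [tr_nonneg m (by omega)]
    exact trig_cos K m h2

lemma theta_poly (n μ j K : ℕ) :
    ∫ θ in (0:ℝ)..Real.pi, Real.cos θ ^ j * Real.sin θ ^ (2*K) * Th n (2*μ) θ * Real.sin θ =
      ∫ x in (-1:ℝ)..1, (x^j * (1-x^2)^(K+μ)) * (DR n (n+2*μ)).eval x := by
  rw [← theta_sub _ (by fun_prop)]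
  refine intervalIntegral.integral_congr fun θ _ => ?_
  simp only [Th, ← Real.sin_sq]
  ring

lemma CF_vanish (n : ℕ) (m : ℤ) (p : ℕ) (hp : p ≤ 1) (j k : ℕ) (hn : j + 2*(2*k+p) < n) :
    CF n m (Emb p (ee (j, k))) = 0 := by
  rw [CF_basis n m p hp]
  by_cases h : m < 0 ∨ ∀ i : ℕ, i ≤ 2*k+p → m ≠ 4*i - 2*(2*k+p : ℕ)
  · rw [trig_zero _ _ h]; simp
  · push Not at h
    obtain ⟨h0, i, hi, he⟩ := h
    obtain ⟨μ, hμ⟩ : ∃ μ : ℕ, m.natAbs = 2*μ := ⟨m.natAbs/2, by omega⟩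
    rw [hμ, theta_poly, leg_vanish n μ j (2*k+p) (by omega) hn]
    simp

lemma CF_parity (n : ℕ) (j k : ℕ) : CF n 2 (Emb 0 (ee (j, k))) = 0 := by
  rw [CF_basis n 2 0 (by omega), trig_zero]
  · simp
  · right; intro i hi; omega

lemma CF_bound_ee (n : ℕ) (m : ℤ) (hm : |m| ≤ (n:ℤ)) (p : ℕ) (hp : p ≤ 1) (j k : ℕ) :
    ‖CF n m (Emb p (ee (j, k)))‖ ≤ (2 * Real.pi^2 * 64^2) * (2 * (2*n+1) * (1/16)^n) := by
  have hπ := Real.pi_pos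
  by_cases hn : j + 2*(2*k+p) < n
  · rw [CF_vanish n m p hp j k hn, norm_zero]; positivity
  · have hb : ∀ θ φ, ‖wY n m θ φ * VV θ φ (Emb p (ee (j, k)))‖ ≤ 64^2 * (2 * (2*n+1) * (1/16)^n) := by
      intro θ φ
      rw [norm_mul]
      have h1 : ‖wY n m θ φ‖ ≤ 2 * (2*n+1) * 4^n := by
        unfold wY
        rw [norm_mul]
        have := Y_bound n m hm θ φ
        have hs : ‖Real.sin θ‖ ≤ 1 := Real.abs_sin_le_one θ
        calc _ ≤ (2 * (2*(n:ℝ)+1) * 4^n) * 1 := mul_le_mul this hs (norm_nonneg _) (by positivity)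
          _ = 2 * (2*(n:ℝ)+1) * 4^n := by ring
      have h2 : ‖VV θ φ (Emb p (ee (j, k)))‖ ≤ 64^2 * (1/64)^n := by
        rw [VV_Emb_ee p hp, norm_mul, norm_mul, norm_pow, norm_pow, norm_pow]
        have a1 : ‖Real.cos θ‖^j ≤ 1 := pow_le_one₀ (norm_nonneg _) (Real.abs_cos_le_one θ)
        have a2 : ‖uu θ φ‖^(2*k+p) ≤ 1 := pow_le_one₀ (norm_nonneg _) (uu_abs θ φ)
        have a3 : ‖(1/64:ℝ)‖^(j+4*k) ≤ 64^2 * (1/64)^n := by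
          rw [Real.norm_of_nonneg (by norm_num)]
          have : (1/64:ℝ)^(j+4*k+2) ≤ (1/64)^n :=
            pow_le_pow_of_le_one (by norm_num) (by norm_num) (by omega)
          rw [pow_add] at this
          linarith
        calc _ ≤ (64^2 * (1/64:ℝ)^n) * (1 * 1) := by gcongr
          _ = 64^2 * (1/64:ℝ)^n := by ring
      calc _ ≤ (2 * (2*(n:ℝ)+1) * 4^n) * (64^2 * (1/64)^n) := mul_le_mul h1 h2 (norm_nonneg _) (by positivity)
        _ = 64^2 * (2 * (2*(n:ℝ)+1) * (4^n * (1/64:ℝ)^n)) := by ring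
        _ = _ := by rw [← mul_pow]; norm_num
    rw [CF_apply]
    have h1 : ∀ φ, ‖∫ θ in (0:ℝ)..Real.pi, wY n m θ φ * VV θ φ (Emb p (ee (j, k)))‖ ≤
        (64^2 * (2 * (2*n+1) * (1/16)^n)) * Real.pi := by
      intro φ
      have := intervalIntegral.norm_integral_le_of_norm_le_const (a := 0) (b := Real.pi)
        (f := fun θ => wY n m θ φ * VV θ φ (Emb p (ee (j, k)))) (fun θ _ => hb θ φ)
      rwa [sub_zero, abs_of_pos hπ] at this
    have := intervalIntegral.norm_integral_le_of_norm_le_const (a := 0) (b := 2*Real.pi)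
        (f := fun φ => ∫ θ in (0:ℝ)..Real.pi, wY n m θ φ * VV θ φ (Emb p (ee (j, k)))) (fun φ _ => h1 φ)
    rw [sub_zero, abs_of_pos (by positivity)] at this
    refine this.trans (le_of_eq ?_)
    ring

lemma CF_bound (n : ℕ) (m : ℤ) (hm : |m| ≤ (n:ℤ)) (a : ZZ) :
    |CF n m a| ≤ 2 * ((2 * Real.pi^2 * 64^2) * (2 * (2*n+1) * (1/16)^n)) * ‖a‖ := by
  have e : a = Emb 0 a.1 + Emb 1 a.2 := by
    simp [Emb]
  have h0 := XX_bound ((CF n m).comp (Emb 0)) _ (fun i => CF_bound_ee n m hm 0 (by omega) i.1 i.2) a.1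
  have h1 := XX_bound ((CF n m).comp (Emb 1)) _ (fun i => CF_bound_ee n m hm 1 (by omega) i.1 i.2) a.2
  simp only [ContinuousLinearMap.comp_apply, Real.norm_eq_abs] at h0 h1
  set C := (2 * Real.pi^2 * 64^2) * (2 * (2*(n:ℝ)+1) * (1/16)^n)
  have hC : 0 ≤ C := by positivity
  have n1 : ‖a.1‖ ≤ ‖a‖ := norm_fst_le a
  have n2 : ‖a.2‖ ≤ ‖a‖ := norm_snd_le a
  have e2 : CF n m a = CF n m (Emb 0 a.1) + CF n m (Emb 1 a.2) := by
    conv_lhs => rw [e]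
    rw [map_add]
  rw [e2]
  refine (abs_add_le _ _).trans ?_
  nlinarith

def CS2 : ℝ := (2*(2 * Real.pi^2 * 64^2)*2)^2

lemma num_bound (n : ℕ) (m : ℤ) (hm : |m| ≤ (n:ℤ)) :
    (muSp n)^2 * ((2*(n:ℝ)+1) * (1/16)^n)^2 ≤ 4 * ((1/2)^n * (1/2)^m.natAbs) := by
  have hm' : m.natAbs ≤ n := by
    rw [Int.abs_eq_natAbs] at hm; exact_mod_cast hm
  have h1 : muSp n ≤ 4^n := by
    unfold muSp
    induction n with
    | zero => simp
    | succ n ih =>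
      have : ∀ n : ℕ, (n:ℝ)*(n+1)+1 ≤ 4^n := by
        intro n
        induction n with
        | zero => simp
        | succ n ih => push_cast; rw [pow_succ]; nlinarith [show (0:ℝ) ≤ n by positivity]
      exact this (n+1)
  have h2 : 2*(n:ℝ)+1 ≤ 2*2^n := by
    have : ∀ n : ℕ, 2*(n:ℝ)+1 ≤ 2*2^n - 1 := by
      intro n
      induction n with
      | zero => norm_num
      | succ n ih => push_cast; rw [pow_succ]; nlinarith [show (0:ℝ) ≤ n by positivity]
    linarith [this n]
  have h0 : 0 ≤ muSp n := by unfold muSp; positivity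
  have h3 : (1/4:ℝ)^n ≤ (1/2)^n * (1/2)^m.natAbs := by
    calc (1/4:ℝ)^n = (1/2)^n * (1/2)^n := by rw [← mul_pow]; norm_num
      _ ≤ _ := by
        refine mul_le_mul_of_nonneg_left ?_ (by positivity)
        exact pow_le_pow_of_le_one (by norm_num) (by norm_num) hm'
  calc (muSp n)^2 * ((2*(n:ℝ)+1) * (1/16)^n)^2 ≤ (4^n)^2 * ((2*2^n) * (1/16)^n)^2 := by gcongr
    _ = 4 * ((4*4*2*2*(1/16)*(1/16):ℝ))^n := by simp only [mul_pow]; ring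
    _ = 4 * (1/4)^n := by norm_num
    _ ≤ _ := by linarith

lemma sob_bound : ∃ C : ℝ, 0 < C ∧ ∀ a : ZZ, sobNormSq 2 (FF a) ≤ ENNReal.ofReal ((C*‖a‖)^2) := by
  have hsum : Summable (fun q : ℕ × ℤ => (1/2:ℝ)^q.1 * (1/2:ℝ)^q.2.natAbs) := by
    have s1 : Summable (fun n : ℕ => (1/2:ℝ)^n) := summable_geometric_two
    have s2 : Summable (fun m : ℤ => (1/2:ℝ)^m.natAbs) := by
      apply Summable.of_nat_of_neg <;> simpa using summable_geometric_two
    exact s1.mul_of_nonneg s2 (fun n => by positivity) (fun m => by positivity)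
  set S := ∑' q : ℕ × ℤ, (1/2:ℝ)^q.1 * (1/2:ℝ)^q.2.natAbs with hS
  have hS0 : 0 ≤ S := tsum_nonneg fun q => by positivity
  refine ⟨Real.sqrt (CS2 * 4 * S) + 1, by positivity, fun a => ?_⟩
  have hterm : ∀ q : ℕ × ℤ, (if |q.2| ≤ (q.1 : ℤ) then
    ENNReal.ofReal ((muSp q.1)^2 * (coeff (FF a) q.1 q.2)^2) else 0) ≤
      ENNReal.ofReal ((CS2 * 4 * ‖a‖^2) * ((1/2:ℝ)^q.1 * (1/2:ℝ)^q.2.natAbs)) := by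
    rintro ⟨n, m⟩
    dsimp only
    split_ifs with hm
    · apply ENNReal.ofReal_le_ofReal
      rw [coeff_FF]
      have h1 := CF_bound n m hm a
      have h2 := num_bound n m hm
      have h3 : (CF n m a)^2 ≤ (2 * ((2 * Real.pi^2 * 64^2) * (2 * (2*n+1) * (1/16)^n)) * ‖a‖)^2 := by
        rw [← sq_abs]; gcongr
      calc _ ≤ (muSp n)^2 * (2 * ((2 * Real.pi^2 * 64^2) * (2 * (2*n+1) * (1/16)^n)) * ‖a‖)^2 := by gcongr
        _ = (CS2 * ‖a‖^2) * ((muSp n)^2 * ((2*(n:ℝ)+1) * (1/16)^n)^2) := by unfold CS2; ring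
        _ ≤ (CS2 * ‖a‖^2) * (4 * ((1/2)^n * (1/2)^m.natAbs)) := by
            refine mul_le_mul_of_nonneg_left h2 ?_
            unfold CS2; positivity
        _ = _ := by ring
    · positivity
  unfold sobNormSq
  refine (ENNReal.tsum_le_tsum hterm).trans ?_
  have hC : 0 ≤ CS2 := by unfold CS2; positivity
  rw [← ENNReal.ofReal_tsum_of_nonneg (fun q => by positivity) (hsum.mul_left _), tsum_mul_left]
  apply ENNReal.ofReal_le_ofReal
  rw [← hS]
  have h4 : CS2 * 4 * S ≤ (Real.sqrt (CS2*4*S) + 1)^2 := by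
    have := Real.sq_sqrt (show 0 ≤ CS2*4*S by positivity)
    nlinarith [Real.sqrt_nonneg (CS2*4*S)]
  rw [mul_pow]
  nlinarith [sq_nonneg ‖a‖]

/-! ### Part 6: explicit values -/

def zp (j : ℕ) : XX := (64:ℝ)^j • ee (j, 0)

lemma mul_zp (i j : ℕ) : mulX (zp i) (zp j) = zp (i+j) := by
  unfold zp
  simp only [map_smul, smul_apply, mulX_ee, smul_smul, ← pow_add]
  simp [add_comm]

lemma VV_zp (p : ℕ) (hp : p ≤ 1) (θ φ : ℝ) (j : ℕ) :
    VV θ φ (Emb p (zp j)) = Real.cos θ ^ j * uu θ φ ^ p := by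
  unfold zp
  rw [map_smul, map_smul, VV_Emb_ee p hp, smul_eq_mul, ← mul_assoc]
  simp only [mul_zero, add_zero, zero_add]
  rw [← mul_pow]; norm_num

lemma cB_zero (p : ℕ) (hp : p ≤ 1) : cB p 0 = 0 := by
  unfold cB; interval_cases p <;> simp

lemma TK_zp_lt (p : ℕ) (hp : p ≤ 1) (j : ℕ) (hj : j < 2) (hn : j + 2*p ≠ 2) :
    TK p (zp j) = (6 - ((j:ℝ)+2*p)*((j:ℝ)+2*p+1))⁻¹ • ((zp j, 0) : XX × ℝ) := by
  unfold zp
  rw [map_smul, TK_ee, sS, if_neg (by omega), cB_zero p hp]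
  have hA : cA j = 0 := by interval_cases j <;> simp [cA]
  rw [hA]
  simp only [zero_smul, sub_zero, cN]
  rw [smul_comm]
  push_cast
  simp

lemma TK_zp_rec (p : ℕ) (hp : p ≤ 1) (j : ℕ) (hn : (j+2) + 2*p ≠ 2) :
    TK p (zp (j+2)) = (6 - ((j:ℝ)+2+2*p)*((j:ℝ)+2+2*p+1))⁻¹ •
      (((zp (j+2), 0) : XX × ℝ) - (((j:ℝ)+2)*((j:ℝ)+1)) • TK p (zp j)) := by
  unfold zp
  rw [map_smul, map_smul, TK_ee, TK_ee, sS, if_neg (by omega), cB_zero p hp, dif_pos (by omega),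
    Nat.add_sub_cancel]
  simp only [zero_smul, sub_zero, cN, cA]
  rw [smul_comm, smul_sub, smul_smul, smul_smul, pow_add]
  push_cast
  congr 2
  · congr 1; ring
  · simp
  · congr 1; field_simp; ring

lemma TK1_zp0 : TK 1 (zp 0) = (0, 1) := by
  unfold zp
  rw [map_smul, TK_ee, sS, if_pos (by omega)]
  simp [cA]

lemma TK0_zp2 : TK 0 (zp 2) = (1/3:ℝ) • TK 0 (zp 0) + (0, 1) := by
  unfold zp
  rw [map_smul, map_smul, TK_ee, TK_ee, sS, if_pos (by omega), dif_pos (by omega)]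
  simp only [cA, smul_add, smul_smul, Nat.sub_self]
  congr 1
  · congr 1; norm_num
  · ext <;> norm_num

def k0 (a : XX) : ℝ := (TK 0 a).2
def k1 (a : XX) : ℝ := (TK 1 a).2

lemma k0_add (a b : XX) : k0 (a+b) = k0 a + k0 b := by simp [k0]
lemma k0_smul (c : ℝ) (a : XX) : k0 (c • a) = c * k0 a := by simp [k0]
lemma k1_add (a b : XX) : k1 (a+b) = k1 a + k1 b := by simp [k1]
lemma k1_smul (c : ℝ) (a : XX) : k1 (c • a) = c * k1 a := by simp [k1]

lemma k0_rec (j : ℕ) (h : j ≠ 0) : k0 (zp (j+2)) =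
    (6 - ((j:ℝ)+2)*((j:ℝ)+2+1))⁻¹ * (- (((j:ℝ)+2)*((j:ℝ)+1)) * k0 (zp j)) := by
  unfold k0; rw [TK_zp_rec 0 (by omega) j (by omega)]; simp

lemma k1_rec (j : ℕ) : k1 (zp (j+2)) =
    (6 - ((j:ℝ)+2+2)*((j:ℝ)+2+2+1))⁻¹ * (- (((j:ℝ)+2)*((j:ℝ)+1)) * k1 (zp j)) := by
  unfold k1; rw [TK_zp_rec 1 (by omega) j (by omega)]; simp

lemma k0_0 : k0 (zp 0) = 0 := by unfold k0; rw [TK_zp_lt] <;> simp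
lemma k0_1 : k0 (zp 1) = 0 := by unfold k0; rw [TK_zp_lt] <;> simp
lemma k0_2 : k0 (zp 2) = 1 := by
  have := k0_0; unfold k0 at *; rw [TK0_zp2]; simp [this]
lemma k0_3 : k0 (zp 3) = 0 := by rw [k0_rec 1 (by omega), k0_1]; simp
lemma k0_4 : k0 (zp 4) = 6/7 := by rw [k0_rec 2 (by omega), k0_2]; norm_num
lemma k0_5 : k0 (zp 5) = 0 := by rw [k0_rec 3 (by omega), k0_3]; simp
lemma k0_6 : k0 (zp 6) = 5/7 := by rw [k0_rec 4 (by omega), k0_4]; norm_num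
lemma k0_7 : k0 (zp 7) = 0 := by rw [k0_rec 5 (by omega), k0_5]; simp
lemma k0_8 : k0 (zp 8) = 20/33 := by rw [k0_rec 6 (by omega), k0_6]; norm_num

lemma k1_0 : k1 (zp 0) = 1 := by unfold k1; rw [TK1_zp0]
lemma k1_1 : k1 (zp 1) = 0 := by unfold k1; rw [TK_zp_lt] <;> simp
lemma k1_2 : k1 (zp 2) = 1/7 := by rw [k1_rec 0, k1_0]; norm_num
lemma k1_3 : k1 (zp 3) = 0 := by rw [k1_rec 1, k1_1]; simp
lemma k1_4 : k1 (zp 4) = 1/21 := by rw [k1_rec 2, k1_2]; norm_num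
lemma k1_5 : k1 (zp 5) = 0 := by rw [k1_rec 3, k1_3]; simp
lemma k1_6 : k1 (zp 6) = 5/231 := by rw [k1_rec 4, k1_4]; norm_num

/-- coefficient functionals on the odd part -/
def cc (n : ℕ) : XX →L[ℝ] ℝ := (CF n 2).comp (Emb 1)
def ct (n : ℕ) : XX →L[ℝ] ℝ := ((cc n).comp (ContinuousLinearMap.fst ℝ XX ℝ)).comp (TK 1)

lemma ct_rec (n j : ℕ) : ct n (zp (j+2)) =
    (6 - ((j:ℝ)+2+2)*((j:ℝ)+2+2+1))⁻¹ * (cc n (zp (j+2)) - (((j:ℝ)+2)*((j:ℝ)+1)) * ct n (zp j)) := by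
  unfold ct
  simp only [ContinuousLinearMap.comp_apply]
  rw [TK_zp_rec 1 (by omega) j (by omega)]
  simp

lemma ct_0 (n : ℕ) : ct n (zp 0) = 0 := by
  unfold ct
  simp only [ContinuousLinearMap.comp_apply]
  rw [TK1_zp0]; simp

lemma ct_1 (n : ℕ) : ct n (zp 1) = -(1/6) * cc n (zp 1) := by
  unfold ct
  simp only [ContinuousLinearMap.comp_apply]
  rw [TK_zp_lt 1 (by omega) 1 (by omega) (by omega)]
  simp only [ContinuousLinearMap.coe_fst', Prod.smul_fst, map_smul, smul_eq_mul]
  norm_num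

lemma cos_sq_int : ∫ φ in (0:ℝ)..(2*Real.pi), Real.cos (2*φ)^1 * tr 2 φ = Real.pi := by
  have e : ∀ φ : ℝ, Real.cos (2*φ)^1 * tr 2 φ = 1/2 + (1/2) * Real.cos (4*φ) := by
    intro φ
    have h4 : Real.cos (4*φ) = 2 * Real.cos (2*φ)^2 - 1 := by
      rw [← Real.cos_two_mul]; congr 1; ring
    rw [tr_nonneg 2 (by omega), h4]
    push_cast; ring
  simp only [e]
  rw [intervalIntegral.integral_add (by simp) (by apply Continuous.intervalIntegrable; fun_prop),
    intervalIntegral.integral_const_mul, intervalIntegral.integral_comp_mul_left (fun x => Real.cos x) (by norm_num),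
    integral_cos]
  have := Real.sin_nat_mul_pi 8
  push_cast at this
  rw [show (4:ℝ) * (2*Real.pi) = 8 * Real.pi by ring, this]
  simp
  try ring

lemma cc_zp (n j : ℕ) : cc n (zp j) = kap n 2 * Real.pi *
    ∫ x in (-1:ℝ)..1, (x^j * (1-x^2)^2) * (DR n (n+2)).eval x := by
  unfold cc zp
  simp only [ContinuousLinearMap.comp_apply, map_smul, smul_eq_mul]
  rw [CF_basis n 2 1 (by omega)]
  have := theta_poly n 1 j 1
  simp only [mul_zero, zero_add, add_zero, mul_one, show (2:ℤ).natAbs = 2 from rfl, show 1 + 1 = 2 from rfl] at this ⊢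
  rw [cos_sq_int, this]
  have h : (64:ℝ)^j * (1/64)^j = 1 := by rw [← mul_pow]; norm_num
  linear_combination (kap n 2 * Real.pi *
    ∫ x in (-1:ℝ)..1, (x^j * (1-x^2)^2) * (DR n (n+2)).eval x) * h

lemma itd_add (k : ℕ) (p q : Polynomial ℝ) : Polynomial.derivative^[k] (p+q) =
    Polynomial.derivative^[k] p + Polynomial.derivative^[k] q := iterate_map_add _ _ _ _

lemma itd_one (k : ℕ) : Polynomial.derivative^[k+2] (1 : Polynomial ℝ) = 0 := by
  rw [Function.iterate_succ_apply]; simp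

lemma DR4 : DR 4 (4+2) = Polynomial.C 2880 * (7 * Polynomial.X^2 - 1) := by
  unfold DR RR
  rw [show ((Polynomial.X^2 - 1 : Polynomial ℝ))^4 = Polynomial.X^8 - Polynomial.C 4 * Polynomial.X^6 + Polynomial.C 6 * Polynomial.X^4 - Polynomial.C 4 * Polynomial.X^2 + 1 by
    simp only [show (Polynomial.C 4 : Polynomial ℝ) = 4 from rfl, show (Polynomial.C 6 : Polynomial ℝ) = 6 from rfl]; ring]
  simp only [Polynomial.iterate_derivative_sub, itd_add, Polynomial.iterate_derivative_C_mul, Polynomial.iterate_derivative_X_pow_eq_C_mul, itd_one]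
  norm_num [Nat.descFactorial, show (7 : Polynomial ℝ) = Polynomial.C 7 from rfl, show (1 : Polynomial ℝ) = Polynomial.C 1 from rfl, mul_sub, ← mul_assoc, ← Polynomial.C_mul]
  rw [show (7 : Polynomial ℝ) = Polynomial.C 7 from rfl, ← Polynomial.C_mul]; norm_num

lemma DR6 : DR 6 (6+2) = Polynomial.C 604800 * (33 * Polynomial.X^4 - 18 * Polynomial.X^2 + 1) := by
  unfold DR RR
  rw [show ((Polynomial.X^2 - 1 : Polynomial ℝ))^6 = Polynomial.X^12 - Polynomial.C 6 * Polynomial.X^10 + Polynomial.C 15 * Polynomial.X^8 - Polynomial.C 20 * Polynomial.X^6 + Polynomial.C 15 * Polynomial.X^4 - Polynomial.C 6 * Polynomial.X^2 + 1 by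
    simp only [show (Polynomial.C 15 : Polynomial ℝ) = 15 from rfl, show (Polynomial.C 20 : Polynomial ℝ) = 20 from rfl, show (Polynomial.C 6 : Polynomial ℝ) = 6 from rfl]; ring]
  simp only [Polynomial.iterate_derivative_sub, itd_add, Polynomial.iterate_derivative_C_mul, Polynomial.iterate_derivative_X_pow_eq_C_mul, itd_one]
  norm_num [Nat.descFactorial, show (33 : Polynomial ℝ) = Polynomial.C 33 from rfl, show (18 : Polynomial ℝ) = Polynomial.C 18 from rfl, show (1 : Polynomial ℝ) = Polynomial.C 1 from rfl, mul_sub, mul_add, ← mul_assoc, ← Polynomial.C_mul]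
  rw [show (33 : Polynomial ℝ) = Polynomial.C 33 from rfl, show (18 : Polynomial ℝ) = Polynomial.C 18 from rfl, ← Polynomial.C_mul, ← Polynomial.C_mul]; norm_num

lemma mono_int (c : ℝ) (i : ℕ) : ∫ x in (-1:ℝ)..1, c * x^i = c * ((1 - (-1)^(i+1))/(i+1)) := by
  rw [intervalIntegral.integral_const_mul, integral_pow]; simp

lemma cc4_zp (j : ℕ) : cc 4 (zp j) = (kap 4 2 * Real.pi * 2880) *
    (7*((1 - (-1)^(j+7))/(j+7)) - 15 * ((1 - (-1)^(j+5))/(j+5)) + 9*((1 - (-1)^(j+3))/(j+3)) - ((1 - (-1)^(j+1))/(j+1))) := by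
  rw [cc_zp, DR4]
  have : ∀ x : ℝ, (x^j * (1-x^2)^2) * (Polynomial.C 2880 * (7 * Polynomial.X^2 - 1) : Polynomial ℝ).eval x
     = 2880*7 * x^(j+6) + (-(2880*15)) * x^(j+4) + 2880*9 * x^(j+2) + (-2880) * x^j := by
    intro x; simp; ring
  simp only [this]
  rw [intervalIntegral.integral_add, intervalIntegral.integral_add, intervalIntegral.integral_add,
    mono_int, mono_int, mono_int, mono_int]
  · push_cast; ring
  all_goals apply Continuous.intervalIntegrable; fun_prop

lemma cc6_zp (j : ℕ) : cc 6 (zp j) = (kap 6 2 * Real.pi * 604800) *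
    (33*((1 - (-1)^(j+9))/(j+9)) - 84 * ((1 - (-1)^(j+7))/(j+7)) + 70*((1 - (-1)^(j+5))/(j+5)) - 20 * ((1 - (-1)^(j+3))/(j+3)) + ((1 - (-1)^(j+1))/(j+1))) := by
  rw [cc_zp, DR6]
  have : ∀ x : ℝ, (x^j * (1-x^2)^2) * (Polynomial.C 604800 * (33 * Polynomial.X^4 - 18 * Polynomial.X^2 + 1) : Polynomial ℝ).eval x
     = 604800*33 * x^(j+8) + (-(604800*84)) * x^(j+6) + 604800*70 * x^(j+4) + (-604800*20) * x^(j+2) + 604800 * x^j := by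
    intro x; simp; ring
  simp only [this]
  rw [intervalIntegral.integral_add, intervalIntegral.integral_add, intervalIntegral.integral_add, intervalIntegral.integral_add,
    mono_int, mono_int, mono_int, mono_int, mono_int]
  · push_cast; ring
  all_goals apply Continuous.intervalIntegrable; fun_prop

lemma ct4_zp (j : ℕ) (hj : j ≤ 6) : ct 4 (zp j) = -(1/14) * cc 4 (zp j) := by
  have h0 : ct 4 (zp 0) = -(1/14) * cc 4 (zp 0) := by rw [ct_0, cc4_zp]; norm_num
  have h1 : ct 4 (zp 1) = -(1/14) * cc 4 (zp 1) := by rw [ct_1, cc4_zp]; norm_num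
  have h2 : ct 4 (zp 2) = -(1/14) * cc 4 (zp 2) := by rw [ct_rec 4 0, h0, cc4_zp, cc4_zp]; norm_num
  have h3 : ct 4 (zp 3) = -(1/14) * cc 4 (zp 3) := by rw [ct_rec 4 1, h1, cc4_zp, cc4_zp]; norm_num
  have h4 : ct 4 (zp 4) = -(1/14) * cc 4 (zp 4) := by rw [ct_rec 4 2, h2, cc4_zp, cc4_zp]; norm_num; ring
  have h5 : ct 4 (zp 5) = -(1/14) * cc 4 (zp 5) := by rw [ct_rec 4 3, h3, cc4_zp, cc4_zp]; norm_num
  have h6 : ct 4 (zp 6) = -(1/14) * cc 4 (zp 6) := by rw [ct_rec 4 4, h4, cc4_zp, cc4_zp]; norm_num; ring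
  interval_cases j <;> assumption

lemma ct6_zp (j : ℕ) (hj : j ≤ 6) : ct 6 (zp j) = -(1/36) * cc 6 (zp j) := by
  have h0 : ct 6 (zp 0) = -(1/36) * cc 6 (zp 0) := by rw [ct_0, cc6_zp]; norm_num
  have h1 : ct 6 (zp 1) = -(1/36) * cc 6 (zp 1) := by rw [ct_1, cc6_zp]; norm_num
  have h2 : ct 6 (zp 2) = -(1/36) * cc 6 (zp 2) := by rw [ct_rec 6 0, h0, cc6_zp, cc6_zp]; norm_num
  have h3 : ct 6 (zp 3) = -(1/36) * cc 6 (zp 3) := by rw [ct_rec 6 1, h1, cc6_zp, cc6_zp]; norm_num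
  have h4 : ct 6 (zp 4) = -(1/36) * cc 6 (zp 4) := by rw [ct_rec 6 2, h2, cc6_zp, cc6_zp]; norm_num
  have h5 : ct 6 (zp 5) = -(1/36) * cc 6 (zp 5) := by rw [ct_rec 6 3, h3, cc6_zp, cc6_zp]; norm_num
  have h6 : ct 6 (zp 6) = -(1/36) * cc 6 (zp 6) := by rw [ct_rec 6 4, h4, cc6_zp, cc6_zp]; norm_num; ring
  interval_cases j <;> assumption

lemma kap_pos (n : ℕ) : 0 < kap n 2 := by
  unfold kap
  have := Real.pi_pos
  rw [if_neg (by norm_num)]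
  positivity

/-! ### Part 7: linear algebra -/

lemma brk_pos (a b : ℝ) (ha : 0 ≤ a) (hb : 0 < b) :
    0 < a^3 - 24/7*a^2*b + (8*354729375/1195569375)*a*b^2 + (32*354729375/4383754375)*b^3 := by
  have h1 : 0 ≤ (a + 0.311*b)*(a-1.87*b)^2 := by positivity
  have h2 : 0 < b^3 := by positivity
  have h3 : 0 ≤ a*b^2 := by positivity
  have h4 : 0 ≤ a^2*b := by positivity
  have h5 : 0 ≤ b * (a - b)^2 := by positivity
  nlinarith

def vv1 (g h : ℝ) : ℝ := (g^2/3+ 18*h^2/11)*(g^2+3*h^2) - (18/11*g^2 + 405/143*h^2)*h^2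
def vv2 (g h : ℝ) : ℝ := -(g^2*h+3*h^3)
def e1 (g h p0 p1 p2 p3 : ℝ) : ℝ := p0+p1*(3*h/7)+p2*(g^2/7+3*h^2/7)+p3*(3*g^2*h/7+45*h^3/77)
def e0 (g h p0 p1 p2 p3 : ℝ) : ℝ := 3*h*p0+(p1/2)*(g^2+54*h^2/7)+(p2/3)*(54*g^2*h/7+135*h^3/7)+(p3/4)*(6*g^4/7+270/7*g^2*h^2+(540/11)*h^4)
def e4 (g h p1 p2 p3 : ℝ) : ℝ := (64/105)*h*p1+(64*g^2/315+384*h^2/385)*p2+(384*g^2*h/385+1728*h^3/1001)*p3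
def e6 (g h p2 p3 : ℝ) : ℝ := (2048/5005)*h^2*p2+((2048/5005)*g^2*h+(6144/5005)*h^3)*p3

lemma lin_solve (g h s4 s6 : ℝ) (hgh : g ≠ 0 ∨ h ≠ 0) (hs : h = 0 → s6 = 0) :
    ∃ p0 p1 p2 p3 : ℝ, e1 g h p0 p1 p2 p3 = 0 ∧ e0 g h p0 p1 p2 p3 = 0 ∧ e4 g h p1 p2 p3 = s4 ∧
      e6 g h p2 p3 = s6 := by
  by_cases hh : h = 0
  · have hg : g ≠ 0 := by tauto
    subst hh
    refine ⟨-(s4*315/(64*g^2))*(g^2/7), 0, s4*315/(64*g^2), 0, ?_, ?_, ?_, ?_⟩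
    · unfold e1; ring
    · unfold e0; ring
    · unfold e4; field_simp; ring
    · rw [hs rfl]; unfold e6; ring
  · set v1 := vv1 g h with hv1
    set v2 := vv2 g h with hv2
    set v0 := -(v1*(3*h/7)+v2*(g^2/7+3*h^2/7)+h^2*(3*g^2*h/7+45*h^3/77)) with hv0
    have hD : e0 g h v0 v1 v2 (h^2) ≠ 0 := by
      have hb := brk_pos (g^2) (h^2) (by positivity) (by positivity)
      have : e0 g h v0 v1 v2 (h^2) = 1/6 * ((g^2)^3 - 24/7*(g^2)^2*h^2 + (8*354729375/1195569375)*g^2*(h^2)^2 + (32*354729375/4383754375)*(h^2)^3) := by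
        rw [hv0, hv1, hv2]; unfold e0 vv1 vv2; ring
      rw [this]; positivity
    set u2 := s6 / (2048/5005*h^2) with hu2
    set u1 := (s4 - (64*g^2/315+384*h^2/385)*u2)/(64/105*h) with hu1
    set u0 := -(u1*(3*h/7)+u2*(g^2/7+3*h^2/7)) with hu0
    set c := - e0 g h u0 u1 u2 0 / e0 g h v0 v1 v2 (h^2) with hc
    refine ⟨u0 + c*v0, u1+c*v1, u2+c*v2, c*h^2, ?_, ?_, ?_, ?_⟩
    · rw [hu0, hv0]; unfold e1; ring
    · have : e0 g h (u0 + c*v0) (u1+c*v1) (u2+c*v2) (c*h^2) = e0 g h u0 u1 u2 0 + c * e0 g h v0 v1 v2 (h^2) := by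
        unfold e0; ring
      rw [this, hc]; field_simp; ring
    · have h1 : e4 g h v1 v2 (h^2) = 0 := by rw [hv1, hv2]; unfold e4 vv1 vv2; ring
      have h2 : e4 g h u1 u2 0 = s4 := by
        unfold e4; rw [hu1]; field_simp; ring
      have : e4 g h (u1+c*v1) (u2+c*v2) (c*h^2) = e4 g h u1 u2 0 + c * e4 g h v1 v2 (h^2) := by
        unfold e4; ring
      rw [this, h1, h2]; ring
    · have h1 : e6 g h v2 (h^2) = 0 := by rw [hv2]; unfold e6 vv2; ring
      have h2 : e6 g h u2 0 = s6 := by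
        unfold e6; rw [hu2]; field_simp; ring
      have : e6 g h (u2+c*v2) (c*h^2) = e6 g h u2 0 + c * e6 g h v2 (h^2) := by
        unfold e6; ring
      rw [this, h1, h2]; ring

/-! ### Part 8: implicit function theorem, powers -/

lemma ift_fix {E : Type*} [NormedAddCommGroup E] [NormedSpace ℝ E] [CompleteSpace E]
    (Φ : ℝ × E → E) (w : E) (h : ContDiffAt ℝ 1 Φ (0, w)) (h0 : ∀ W, Φ (0, W) = w)
    (P : ℝ × E → Prop) (hP : ∀ᶠ x in nhds ((0:ℝ), w), P x) :
    ∃ W : ℝ → E, ∃ C δ : ℝ, 0 < C ∧ 0 < δ ∧ ∀ ε : ℝ, 0 < ε → ε ≤ δ →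
      Φ (ε, W ε) = W ε ∧ P (ε, W ε) ∧ ‖W ε - w‖ ≤ C * ε := by
  have hs : HasStrictFDerivAt Φ (fderiv ℝ Φ (0, w)) (0, w) := h.hasStrictFDerivAt (by norm_num)
  set D := fderiv ℝ Φ (0, w) with hD
  have hs2 : HasStrictFDerivAt (fun x : ℝ × E => x.2 - Φ x) (ContinuousLinearMap.snd ℝ ℝ E - D) (0, w) :=
    hasStrictFDerivAt_snd.sub hs
  have hz : D ∘L .inr ℝ ℝ E = 0 := by
    have h1 : HasFDerivAt (fun W : E => Φ (0, W)) (D ∘L .inr ℝ ℝ E) w := by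
      have : HasFDerivAt (fun W : E => ((0:ℝ), W)) (ContinuousLinearMap.inr ℝ ℝ E) w :=
        hasFDerivAt_prodMk_right _ _
      exact hs.hasFDerivAt.comp w this
    have h2 : HasFDerivAt (fun W : E => Φ (0, W)) (0 : E →L[ℝ] E) w := by
      simp only [h0]; exact hasFDerivAt_const _ _
    exact h1.unique h2
  have hi : ((ContinuousLinearMap.snd ℝ ℝ E - D) ∘L .inr ℝ ℝ E).IsInvertible := by
    have : (ContinuousLinearMap.snd ℝ ℝ E - D) ∘L .inr ℝ ℝ E = ContinuousLinearMap.id ℝ E := by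
      rw [ContinuousLinearMap.sub_comp, hz, sub_zero]; ext x; simp
    rw [this]
    exact ⟨ContinuousLinearEquiv.refl ℝ E, rfl⟩
  set W := hs2.implicitFunctionOfProdDomain hi with hW
  have t1 := hs2.eventually_apply_implicitFunctionOfProdDomain hi
  have t2 := hs2.tendsto_implicitFunctionOfProdDomain hi
  have t3 := hs2.hasStrictFDerivAt_implicitFunctionOfProdDomain hi
  have w0 : W 0 = w := (hs2.eventually_apply_eq_iff_implicitFunctionOfProdDomain hi).self_of_nhds.mp rfl
  have t4 : ∀ᶠ ε in nhds (0:ℝ), P (ε, W ε) := by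
    have : Filter.Tendsto (fun ε => (ε, W ε)) (nhds (0:ℝ)) (nhds ((0:ℝ), w)) := by
      rw [nhds_prod_eq]
      exact Filter.Tendsto.prodMk Filter.tendsto_id t2
    exact this.eventually hP
  obtain ⟨C, hC, hO⟩ := t3.hasFDerivAt.isBigO_sub.exists_pos
  have t5 := hO.bound
  obtain ⟨δ, hδ, hall⟩ := Metric.eventually_nhds_iff.mp (t1.and (t4.and t5))
  refine ⟨W, C, δ/2, hC, by positivity, ?_⟩
  intro ε he hle
  have := hall (y := ε) (by simp [abs_of_pos he]; linarith)
  obtain ⟨a1, a2, a3⟩ := this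
  refine ⟨?_, a2, ?_⟩
  · simp only [h0, sub_self] at a1
    exact (sub_eq_zero.mp a1).symm
  · simp only [sub_zero, Real.norm_eq_abs, abs_of_pos he] at a3
    rw [← hW, w0] at a3
    exact a3

def yX : XX := (64:ℝ)^4 • ee (0, 1)

lemma evX_yX (θ φ : ℝ) : evX θ φ yX = uu θ φ ^ 2 := by
  have h := VV_Emb 0 (by omega) θ φ yX
  have h2 : VV θ φ (Emb 0 yX) = uu θ φ^2 := by
    unfold yX
    rw [map_smul, map_smul, VV_Emb_ee 0 (by omega), smul_eq_mul]
    norm_num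
    ring
  rw [h2] at h; simpa using h.symm

def EO (s : ℝ) (A B : XX) : ℕ → XX × XX
  | 0 => (A, B)
  | n+1 => (mulX A (EO s A B n).1 + s • mulX yX (mulX B (EO s A B n).2),
      mulX A (EO s A B n).2 + mulX B (EO s A B n).1)

lemma EO_pow (r : ℝ) (A B : XX) (θ φ : ℝ) (n : ℕ) :
    evX θ φ (EO (r^2) A B n).1 + r * uu θ φ * evX θ φ (EO (r^2) A B n).2 =
      (evX θ φ A + r * uu θ φ * evX θ φ B)^(n+1) := by
  induction n with
  | zero => simp [EO]
  | succ n ih =>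
    rw [pow_succ _ (n+1), ← ih, EO]
    simp only [map_add, map_smul, evX_mul, smul_eq_mul, evX_yX]
    ring

lemma mulX_contDiff {E : Type*} [NormedAddCommGroup E] [NormedSpace ℝ E] {f g : E → XX}
    (hf : ContDiff ℝ 1 f) (hg : ContDiff ℝ 1 g) : ContDiff ℝ 1 (fun x => mulX (f x) (g x)) :=
  (mulX.contDiff.comp hf).clm_apply hg

lemma EO_contDiff {E : Type*} [NormedAddCommGroup E] [NormedSpace ℝ E] {s : E → ℝ} {A B : E → XX}
    (hs : ContDiff ℝ 1 s) (hA : ContDiff ℝ 1 A) (hB : ContDiff ℝ 1 B) (n : ℕ) :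
    ContDiff ℝ 1 (fun x => EO (s x) (A x) (B x) n) := by
  induction n with
  | zero => exact hA.prodMk hB
  | succ n ih =>
    simp only [EO]
    have h1 : ContDiff ℝ 1 (fun x => (EO (s x) (A x) (B x) n).1) := contDiff_fst.comp ih
    have h2 : ContDiff ℝ 1 (fun x => (EO (s x) (A x) (B x) n).2) := contDiff_snd.comp ih
    exact ((mulX_contDiff hA h1).add (hs.smul (mulX_contDiff contDiff_const (mulX_contDiff hB h2)))).prodMk
      ((mulX_contDiff hA h2).add (mulX_contDiff hB h1))

def Q0 (g h : ℝ) : XX := g • zp 1 + (3*h) • zp 2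
def At (g h : ℝ) (x : ℝ × ZZ) : XX := Q0 g h + x.1 • x.2.1
def Bt (x : ℝ × ZZ) : XX := zp 0 + x.1 • x.2.2
def EE (g h : ℝ) (x : ℝ × ZZ) (n : ℕ) : XX × XX := EO (x.1^2) (At g h x) (Bt x) n

lemma EE_contDiff (g h : ℝ) (n : ℕ) : ContDiff ℝ 1 (fun x : ℝ × ZZ => EE g h x n) := by
  unfold EE
  refine EO_contDiff (contDiff_fst.pow 2) ?_ ?_ n
  · exact contDiff_const.add (contDiff_fst.smul (contDiff_fst.comp contDiff_snd))
  · exact contDiff_const.add (contDiff_fst.smul (contDiff_snd.comp contDiff_snd))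

/-- values at `ε = 0` -/
lemma EE_zero (g h : ℝ) (W : ZZ) :
    EE g h (0, W) 0 = (g • zp 1 + (3*h) • zp 2, zp 0) ∧
    EE g h (0, W) 1 = (g^2 • zp 2 + (6*g*h) • zp 3 + (9*h^2) • zp 4, (2*g) • zp 1 + (6*h) • zp 2) ∧
    EE g h (0, W) 2 = (g^3 • zp 3 + (9*g^2*h) • zp 4 + (27*g*h^2) • zp 5 + (27*h^3) • zp 6,
       (3*g^2) • zp 2 + (18*g*h) • zp 3 + (27*h^2) • zp 4) ∧
    EE g h (0, W) 3 = (g^4 • zp 4 + (12*g^3*h) • zp 5 + (54*g^2*h^2) • zp 6 + (108*g*h^3) • zp 7 + (81*h^4) • zp 8,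
       (4*g^3) • zp 3 + (36*g^2*h) • zp 4 + (108*g*h^2) • zp 5 + (108*h^3) • zp 6) := by
  refine ⟨?_, ?_, ?_, ?_⟩ <;>
  · simp only [EE, EO, At, Bt, Q0, zero_smul, add_zero, map_add, map_smul, add_apply, smul_apply, mul_zp,
      ne_eq, OfNat.ofNat_ne_zero, not_false_eq_true, zero_pow]
    try norm_num
    try (constructor <;> module)

/-! ### Part 9: solving the bifurcation equations -/

lemma k0_contDiff {f : ℝ × ZZ → XX} (hf : ContDiff ℝ 1 f) : ContDiff ℝ 1 (fun x => k0 (f x)) :=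
  ((ContinuousLinearMap.snd ℝ XX ℝ).comp (TK 0)).contDiff.comp hf
lemma k1_contDiff {f : ℝ × ZZ → XX} (hf : ContDiff ℝ 1 f) : ContDiff ℝ 1 (fun x => k1 (f x)) :=
  ((ContinuousLinearMap.snd ℝ XX ℝ).comp (TK 1)).contDiff.comp hf

def m11 (g h : ℝ) (x : ℝ × ZZ) : ℝ := k0 (EE g h x 0).1
def m12 (g h : ℝ) (x : ℝ × ZZ) : ℝ := k0 (EE g h x 1).1 / 2
def m21 (g h : ℝ) (x : ℝ × ZZ) : ℝ := k1 (EE g h x 0).2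
def m22 (g h : ℝ) (x : ℝ × ZZ) : ℝ := k1 (EE g h x 1).2 / 2
def mr0 (g h p2 p3 : ℝ) (x : ℝ × ZZ) : ℝ := p2/3 * k0 (EE g h x 2).1 + p3/4 * k0 (EE g h x 3).1
def mr1 (g h p2 p3 : ℝ) (x : ℝ × ZZ) : ℝ := p2/3 * k1 (EE g h x 2).2 + p3/4 * k1 (EE g h x 3).2
def mdet (g h : ℝ) (x : ℝ × ZZ) : ℝ := m11 g h x * m22 g h x - m12 g h x * m21 g h x
def q0 (g h p2 p3 : ℝ) (x : ℝ × ZZ) : ℝ :=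
  (- mr0 g h p2 p3 x * m22 g h x + mr1 g h p2 p3 x * m12 g h x) / mdet g h x
def q1 (g h p2 p3 : ℝ) (x : ℝ × ZZ) : ℝ :=
  (- m11 g h x * mr1 g h p2 p3 x + m21 g h x * mr0 g h p2 p3 x) / mdet g h x
def GG (g h a b p2 p3 : ℝ) (x : ℝ × ZZ) : XX × XX :=
  a • EE g h x 0 + (b/2) • EE g h x 1 + (p2/3) • EE g h x 2 + (p3/4) • EE g h x 3
def PH (G : XX × XX) : ZZ := ((TK 0 G.1).1, (TK 1 G.2).1)

lemma q_spec (g h p2 p3 : ℝ) (x : ℝ × ZZ) (hd : mdet g h x ≠ 0) :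
    k0 (GG g h (q0 g h p2 p3 x) (q1 g h p2 p3 x) p2 p3 x).1 = 0 ∧
    k1 (GG g h (q0 g h p2 p3 x) (q1 g h p2 p3 x) p2 p3 x).2 = 0 := by
  have hd' := hd
  unfold mdet at hd'
  constructor
  · have : q0 g h p2 p3 x * m11 g h x + q1 g h p2 p3 x * m12 g h x + mr0 g h p2 p3 x = 0 := by
      unfold q0 q1; field_simp; unfold mdet; ring
    unfold GG
    simp only [Prod.fst_add, Prod.smul_fst, k0_add, k0_smul]
    unfold m11 m12 mr0 at this
    linear_combination this
  · have : q0 g h p2 p3 x * m21 g h x + q1 g h p2 p3 x * m22 g h x + mr1 g h p2 p3 x = 0 := by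
      unfold q0 q1; field_simp; unfold mdet; ring
    unfold GG
    simp only [Prod.snd_add, Prod.smul_snd, k1_add, k1_smul]
    unfold m21 m22 mr1 at this
    linear_combination this

lemma m_zero (g h p2 p3 : ℝ) (W : ZZ) :
    m11 g h (0, W) = 3*h ∧ m12 g h (0,W) = (g^2+54*h^2/7)/2 ∧ m21 g h (0,W) = 1 ∧
    m22 g h (0,W) = 3*h/7 ∧
    mr0 g h p2 p3 (0,W) = (p2/3)*(54*g^2*h/7+135*h^3/7)+(p3/4)*(6*g^4/7+270/7*g^2*h^2+(540/11)*h^4) ∧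
    mr1 g h p2 p3 (0,W) = p2*(g^2/7+3*h^2/7)+p3*(3*g^2*h/7+45*h^3/77) := by
  obtain ⟨h0, h1, h2, h3⟩ := EE_zero g h W
  unfold m11 m12 m21 m22 mr0 mr1
  rw [h0, h1, h2, h3]
  simp only [k0_add, k0_smul, k1_add, k1_smul, k0_0, k0_1, k0_2, k0_3, k0_4, k0_5, k0_6, k0_7, k0_8,
    k1_0, k1_1, k1_2, k1_3, k1_4, k1_5, k1_6]
  refine ⟨?_, ?_, ?_, ?_, ?_, ?_⟩ <;> first | trivial | ring

lemma det_zero (g h : ℝ) (hgh : g ≠ 0 ∨ h ≠ 0) (W : ZZ) : mdet g h (0, W) ≠ 0 := by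
  obtain ⟨h1, h2, h3, h4, -, -⟩ := m_zero g h 0 0 W
  unfold mdet; rw [h1, h2, h3, h4]
  have : 0 < g^2/2 + 18*h^2/7 := by
    rcases hgh with h | h <;> positivity
  nlinarith

lemma q_zero (g h p0 p1 p2 p3 : ℝ) (hgh : g ≠ 0 ∨ h ≠ 0) (W : ZZ)
    (H1 : e1 g h p0 p1 p2 p3 = 0) (H0 : e0 g h p0 p1 p2 p3 = 0) :
    q0 g h p2 p3 (0, W) = p0 ∧ q1 g h p2 p3 (0, W) = p1 := by
  obtain ⟨h1, h2, h3, h4, h5, h6⟩ := m_zero g h p2 p3 W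
  have hd := det_zero g h hgh W
  unfold e1 at H1
  unfold e0 at H0
  unfold q0 q1
  rw [div_eq_iff hd, div_eq_iff hd]
  unfold mdet
  rw [h1, h2, h3, h4, h5, h6]
  constructor
  · linear_combination (-(3*h/7)) * H0 + ((g^2+54*h^2/7)/2) * H1
  · linear_combination H0 - (3*h) * H1

/-- the odd profile `f'(Q0)` -/
def fQ (g h p0 p1 p2 p3 : ℝ) : XX :=
  p0 • zp 0 + p1 • (g • zp 1 + (3*h) • zp 2) + p2 • (g^2 • zp 2 + (6*g*h) • zp 3 + (9*h^2) • zp 4)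
   + p3 • (g^3 • zp 3 + (9*g^2*h) • zp 4 + (27*g*h^2) • zp 5 + (27*h^3) • zp 6)

lemma GG_zero (g h p0 p1 p2 p3 : ℝ) (W : ZZ) :
    (GG g h p0 p1 p2 p3 (0, W)).2 = fQ g h p0 p1 p2 p3 ∧
    (GG g h p0 p1 p2 p3 (0, W)) = GG g h p0 p1 p2 p3 (0, 0) := by
  obtain ⟨h0, h1, h2, h3⟩ := EE_zero g h W
  obtain ⟨i0, i1, i2, i3⟩ := EE_zero g h 0
  unfold GG fQ
  constructor
  · rw [h0, h1, h2, h3]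
    simp only [Prod.snd_add, Prod.smul_snd]
    module
  · rw [h0, h1, h2, h3, i0, i1, i2, i3]

lemma PH_contDiff : ContDiff ℝ 1 PH := by
  have h1 : ContDiff ℝ 1 (fun G : XX × XX => (TK 0 G.1).1) :=
    ((ContinuousLinearMap.fst ℝ XX ℝ).comp ((TK 0).comp (ContinuousLinearMap.fst ℝ XX XX))).contDiff
  have h2 : ContDiff ℝ 1 (fun G : XX × XX => (TK 1 G.2).1) :=
    ((ContinuousLinearMap.fst ℝ XX ℝ).comp ((TK 1).comp (ContinuousLinearMap.snd ℝ XX XX))).contDiff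
  exact h1.prodMk h2

lemma GG_contDiffAt (g h p2 p3 : ℝ) (x : ℝ × ZZ) (hd : mdet g h x ≠ 0) :
    ContDiffAt ℝ 1 (fun x => PH (GG g h (q0 g h p2 p3 x) (q1 g h p2 p3 x) p2 p3 x)) x := by
  have hE := EE_contDiff g h
  have hE1 : ∀ n, ContDiff ℝ 1 (fun x => (EE g h x n).1) := fun n => contDiff_fst.comp (hE n)
  have hE2 : ∀ n, ContDiff ℝ 1 (fun x => (EE g h x n).2) := fun n => contDiff_snd.comp (hE n)
  have c11 : ContDiff ℝ 1 (m11 g h) := k0_contDiff (hE1 0)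
  have c12 : ContDiff ℝ 1 (m12 g h) := (k0_contDiff (hE1 1)).div_const 2
  have c21 : ContDiff ℝ 1 (m21 g h) := k1_contDiff (hE2 0)
  have c22 : ContDiff ℝ 1 (m22 g h) := (k1_contDiff (hE2 1)).div_const 2
  have cr0 : ContDiff ℝ 1 (mr0 g h p2 p3) :=
    (contDiff_const.mul (k0_contDiff (hE1 2))).add (contDiff_const.mul (k0_contDiff (hE1 3)))
  have cr1 : ContDiff ℝ 1 (mr1 g h p2 p3) :=
    (contDiff_const.mul (k1_contDiff (hE2 2))).add (contDiff_const.mul (k1_contDiff (hE2 3)))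
  have cd : ContDiff ℝ 1 (mdet g h) := (c11.mul c22).sub (c12.mul c21)
  have cq0 : ContDiffAt ℝ 1 (q0 g h p2 p3) x :=
    ((cr0.neg.mul c22).add (cr1.mul c12)).contDiffAt.div cd.contDiffAt hd
  have cq1 : ContDiffAt ℝ 1 (q1 g h p2 p3) x :=
    ((c11.neg.mul cr1).add (c21.mul cr0)).contDiffAt.div cd.contDiffAt hd
  have cG : ContDiffAt ℝ 1 (fun x => GG g h (q0 g h p2 p3 x) (q1 g h p2 p3 x) p2 p3 x) x := by
    unfold GG
    refine ContDiffAt.add (ContDiffAt.add (ContDiffAt.add ?_ ?_) ?_) ?_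
    · exact cq0.smul (hE 0).contDiffAt
    · exact (cq1.div_const 2).smul (hE 1).contDiffAt
    · exact ContDiffAt.const_smul _ (hE 2).contDiffAt
    · exact ContDiffAt.const_smul _ (hE 3).contDiffAt
  exact PH_contDiff.contDiffAt.comp x cG

lemma mdet_cont (g h : ℝ) : Continuous (mdet g h) := by
  have hE := EE_contDiff g h
  have hE1 : ∀ n, ContDiff ℝ 1 (fun x => (EE g h x n).1) := fun n => contDiff_fst.comp (hE n)
  have hE2 : ∀ n, ContDiff ℝ 1 (fun x => (EE g h x n).2) := fun n => contDiff_snd.comp (hE n)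
  have c11 : ContDiff ℝ 1 (m11 g h) := k0_contDiff (hE1 0)
  have c12 : ContDiff ℝ 1 (m12 g h) := (k0_contDiff (hE1 1)).div_const 2
  have c21 : ContDiff ℝ 1 (m21 g h) := k1_contDiff (hE2 0)
  have c22 : ContDiff ℝ 1 (m22 g h) := (k1_contDiff (hE2 1)).div_const 2
  exact ((c11.mul c22).sub (c12.mul c21)).continuous

lemma bifur (g h p0 p1 p2 p3 : ℝ) (hgh : g ≠ 0 ∨ h ≠ 0)
    (H1 : e1 g h p0 p1 p2 p3 = 0) (H0 : e0 g h p0 p1 p2 p3 = 0) :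
    ∃ w : ZZ, w.2 = (TK 1 (fQ g h p0 p1 p2 p3)).1 ∧ ∃ W : ℝ → ZZ, ∃ C δ : ℝ, 0 < C ∧ 0 < δ ∧
      ∀ ε : ℝ, 0 < ε → ε ≤ δ → ‖W ε - w‖ ≤ C * ε ∧ ∃ a b : ℝ,
        k0 (GG g h a b p2 p3 (ε, W ε)).1 = 0 ∧ k1 (GG g h a b p2 p3 (ε, W ε)).2 = 0 ∧
        (W ε).1 = (TK 0 (GG g h a b p2 p3 (ε, W ε)).1).1 ∧
        (W ε).2 = (TK 1 (GG g h a b p2 p3 (ε, W ε)).2).1 := by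
  refine ⟨PH (GG g h p0 p1 p2 p3 (0, 0)), ?_, ?_⟩
  · rw [PH, (GG_zero g h p0 p1 p2 p3 0).1]
  · obtain ⟨W, C, δ, hC, hδ, hall⟩ := ift_fix
      (fun x => PH (GG g h (q0 g h p2 p3 x) (q1 g h p2 p3 x) p2 p3 x))
      (PH (GG g h p0 p1 p2 p3 (0, 0)))
      (GG_contDiffAt g h p2 p3 _ (det_zero g h hgh _))
      (by
        intro W
        obtain ⟨h1, h2⟩ := q_zero g h p0 p1 p2 p3 hgh W H1 H0
        rw [h1, h2, (GG_zero g h p0 p1 p2 p3 W).2])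
      (fun x => mdet g h x ≠ 0)
      ((mdet_cont g h).continuousAt.eventually_ne (det_zero g h hgh _))
    refine ⟨W, C, δ, hC, hδ, ?_⟩
    intro ε he hle
    obtain ⟨a1, a2, a3⟩ := hall ε he hle
    obtain ⟨b1, b2⟩ := q_spec g h p2 p3 _ a2
    refine ⟨a3, _, _, b1, b2, ?_, ?_⟩
    · exact (congrArg Prod.fst a1).symm
    · exact (congrArg Prod.snd a1).symm

/-! ### Part 10: final assembly -/

lemma cc4_fQ (g h p0 p1 p2 p3 : ℝ) : cc 4 (fQ g h p0 p1 p2 p3) =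
    (kap 4 2 * Real.pi * 2880) * e4 g h p1 p2 p3 := by
  unfold fQ e4
  simp only [map_add, map_smul, smul_eq_mul, cc4_zp]
  norm_num
  ring

lemma cc6_fQ (g h p0 p1 p2 p3 : ℝ) : cc 6 (fQ g h p0 p1 p2 p3) =
    (kap 6 2 * Real.pi * 604800) * e6 g h p2 p3 := by
  unfold fQ e6
  simp only [map_add, map_smul, smul_eq_mul, cc6_zp]
  norm_num
  ring

lemma ct4_fQ (g h p0 p1 p2 p3 : ℝ) : ct 4 (fQ g h p0 p1 p2 p3) =
    -(1/14) * cc 4 (fQ g h p0 p1 p2 p3) := by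
  unfold fQ
  simp only [map_add, map_smul, smul_eq_mul]
  rw [ct4_zp 0 (by omega), ct4_zp 1 (by omega), ct4_zp 2 (by omega), ct4_zp 3 (by omega),
    ct4_zp 4 (by omega), ct4_zp 5 (by omega), ct4_zp 6 (by omega)]
  ring

lemma ct6_fQ (g h p0 p1 p2 p3 : ℝ) : ct 6 (fQ g h p0 p1 p2 p3) =
    -(1/36) * cc 6 (fQ g h p0 p1 p2 p3) := by
  unfold fQ
  simp only [map_add, map_smul, smul_eq_mul]
  rw [ct6_zp 0 (by omega), ct6_zp 1 (by omega), ct6_zp 2 (by omega), ct6_zp 3 (by omega),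
    ct6_zp 4 (by omega), ct6_zp 5 (by omega), ct6_zp 6 (by omega)]
  ring

lemma lap_zp (p : ℕ) (hp : p ≤ 1) (θ φ : ℝ) (hθ : θ ∈ Set.Ioo (0:ℝ) Real.pi) (j : ℕ) :
    LamX θ φ (Emb p (zp j)) = (j:ℝ)*((j:ℝ)-1) * VV θ φ (Emb p (zp (j-2)))
      - ((j:ℝ)+2*p)*((j:ℝ)+2*p+1) * VV θ φ (Emb p (zp j)) := by
  have hb := lap_basis p hp θ φ hθ j 0
  rw [cB_zero p hp] at hb
  unfold zp
  simp only [map_smul, smul_eq_mul]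
  rw [hb]
  unfold cA cN
  rcases Nat.lt_or_ge j 2 with h | h
  · interval_cases j <;> · push_cast; ring
  · obtain ⟨i, rfl⟩ := Nat.exists_eq_add_of_le' h
    rw [Nat.add_sub_cancel, pow_add]
    push_cast; ring

lemma Y1 (θ φ : ℝ) : Ynm 1 0 θ φ = Real.sqrt (3/(4*Real.pi)) * Real.cos θ := by
  unfold Ynm
  rw [if_pos rfl, legP_eq]
  simp [DR, RR]
  norm_num
  left
  ring

lemma Y2 (θ φ : ℝ) : Ynm 2 0 θ φ = Real.sqrt (5/(4*Real.pi)) * ((3*Real.cos θ^2-1)/2) := by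
  unfold Ynm
  rw [if_pos rfl, legP_eq]
  have : DR 2 2 = Polynomial.C 12 * Polynomial.X^2 - Polynomial.C 4 := by
    unfold DR RR
    rw [show ((Polynomial.X^2 - 1 : Polynomial ℝ))^2 = Polynomial.X^4 - Polynomial.C 2 * Polynomial.X^2 + 1 by
      simp only [show (Polynomial.C 2 : Polynomial ℝ) = 2 from rfl]; ring]
    have := itd_one 0
    rw [zero_add] at this
    simp only [Polynomial.iterate_derivative_sub, itd_add, Polynomial.iterate_derivative_C_mul, Polynomial.iterate_derivative_X_pow_eq_C_mul, this]
    norm_num [Nat.descFactorial, ← Polynomial.C_mul]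
  rw [this]
  simp
  norm_num
  left
  ring

def PsiE (g h ε : ℝ) (W : ZZ) : ZZ := (At g h (ε, W) - h • zp 0, ε • Bt (ε, W))

lemma PsiE_eq (g h ε : ℝ) (W : ZZ) : PsiE g h ε W =
    g • Emb 0 (zp 1) + (3*h) • Emb 0 (zp 2) - h • Emb 0 (zp 0) + ε • Emb 1 (zp 0)
      + ε • Emb 0 W.1 + ε^2 • Emb 1 W.2 := by
  unfold PsiE At Bt Q0 Emb
  ext1
  · simp; abel
  · simp [smul_smul, pow_two]

lemma pde (g h ε a b p2 p3 : ℝ) (W : ZZ) (hk0 : k0 (GG g h a b p2 p3 (ε, W)).1 = 0)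
    (hk1 : k1 (GG g h a b p2 p3 (ε, W)).2 = 0)
    (hw0 : W.1 = (TK 0 (GG g h a b p2 p3 (ε, W)).1).1)
    (hw1 : W.2 = (TK 1 (GG g h a b p2 p3 (ε, W)).2).1)
    (θ φ : ℝ) (hθ : θ ∈ Set.Ioo (0:ℝ) Real.pi) :
    lapS (FF (PsiE g h ε W)) θ φ - 4 * (g * Real.cos θ) =
      -6 * FF (PsiE g h ε W) θ φ + ε * (a * (FF (PsiE g h ε W) θ φ + h)
        + b/2 * (FF (PsiE g h ε W) θ φ + h)^2 + p2/3 * (FF (PsiE g h ε W) θ φ + h)^3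
        + p3/4 * (FF (PsiE g h ε W) θ φ + h)^4) := by
  have l0 := lap_TK 0 (by omega) θ φ hθ _ hk0
  have l1 := lap_TK 1 (by omega) θ φ hθ _ hk1
  rw [← hw0] at l0
  rw [← hw1] at l1
  rw [VV_Emb 0 (by omega) θ φ (GG g h a b p2 p3 (ε, W)).1] at l0
  rw [VV_Emb 1 (by omega) θ φ (GG g h a b p2 p3 (ε, W)).2] at l1
  have hx : FF (PsiE g h ε W) θ φ + h = evX θ φ (At g h (ε, W)) + ε * uu θ φ * evX θ φ (Bt (ε, W)) := by
    have hz : evX θ φ (zp 0) = 1 := by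
      have h1 := VV_Emb 0 (by omega) θ φ (zp 0)
      rw [VV_zp 0 (by omega)] at h1
      simpa using h1.symm
    unfold FF PsiE
    rw [VV_apply]
    simp only [map_sub, map_smul, smul_eq_mul, hz]
    ring
  have E0 := EO_pow ε (At g h (ε, W)) (Bt (ε, W)) θ φ 0
  have E1 := EO_pow ε (At g h (ε, W)) (Bt (ε, W)) θ φ 1
  have E2 := EO_pow ε (At g h (ε, W)) (Bt (ε, W)) θ φ 2
  have E3 := EO_pow ε (At g h (ε, W)) (Bt (ε, W)) θ φ 3
  rw [← hx] at E0 E1 E2 E3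
  have hG : evX θ φ (GG g h a b p2 p3 (ε, W)).1 + ε * uu θ φ * evX θ φ (GG g h a b p2 p3 (ε, W)).2 =
      a * (FF (PsiE g h ε W) θ φ + h)
        + b/2 * (FF (PsiE g h ε W) θ φ + h)^2 + p2/3 * (FF (PsiE g h ε W) θ φ + h)^3
        + p3/4 * (FF (PsiE g h ε W) θ φ + h)^4 := by
    unfold GG EE
    simp only [Prod.fst_add, Prod.smul_fst, Prod.snd_add, Prod.smul_snd, map_add, map_smul, smul_eq_mul]
    linear_combination a * E0 + b/2*E1 + p2/3*E2 + p3/4*E3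
  rw [← hG, LamX_spec]
  have hF : FF (PsiE g h ε W) θ φ = VV θ φ (PsiE g h ε W) := rfl
  rw [hF, PsiE_eq]
  simp only [map_add, map_sub, map_smul, smul_eq_mul]
  rw [lap_zp 0 (by omega) θ φ hθ 1, lap_zp 0 (by omega) θ φ hθ 2, lap_zp 0 (by omega) θ φ hθ 0,
    lap_zp 1 (by omega) θ φ hθ 0]
  simp only [Nat.sub_self, VV_zp 0 (show 0 ≤ 1 by omega), VV_zp 1 (show 1 ≤ 1 by omega)]
  push_cast
  simp only [pow_zero, pow_one, one_mul, mul_one] at l0 l1 ⊢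
  linear_combination ε * l0 + ε^2 * l1

lemma CF_even (n : ℕ) (a : XX) : CF n 2 (Emb 0 a) = 0 := by
  have : (CF n 2).comp (Emb 0) = 0 := by
    apply XX_ext
    rintro ⟨j, k⟩
    simp [CF_parity]
  exact congrArg (fun L : XX →L[ℝ] ℝ => L a) this

lemma coeff_Psi (n : ℕ) (hn : 2 < n) (g h ε : ℝ) (W : ZZ) :
    coeff (FF (PsiE g h ε W)) n 2 = ε^2 * cc n W.2 := by
  rw [coeff_FF, PsiE_eq]
  simp only [map_add, map_sub, map_smul, smul_eq_mul, CF_even]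
  have : CF n 2 (Emb 1 (zp 0)) = 0 := by
    unfold zp
    simp only [map_smul, smul_eq_mul, CF_vanish n 2 1 (by omega) 0 0 (by omega), mul_zero]
  rw [this]
  simp [cc]

lemma diff_eq (β γ ε : ℝ) (W : ZZ) :
    (fun θ φ => β*Ynm 2 0 θ φ + γ*Ynm 1 0 θ φ
      - FF (PsiE (γ * Real.sqrt (3/(4*Real.pi))) (β * Real.sqrt (5/(4*Real.pi)) / 2) ε W) θ φ)
     = FF (-(ε • ((W.1, zp 0 + ε • W.2) : ZZ))) := by
  funext θ φ
  have e : (-(ε • ((W.1, zp 0 + ε • W.2) : ZZ)) : ZZ) =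
      -(ε • Emb 1 (zp 0) + ε • Emb 0 W.1 + ε^2 • Emb 1 W.2) := by
    unfold Emb
    ext1
    · simp
    · simp [smul_smul, pow_two]
  rw [Y1, Y2, e]
  unfold FF
  rw [PsiE_eq]
  simp only [map_add, map_sub, map_neg, map_smul, smul_eq_mul, VV_zp 0 (show 0 ≤ 1 by omega)]
  ring

set_option maxHeartbeats 1000000 in
lemma main_aux (β γ : ℝ) (hβγ : 0 < β^2 + γ^2) :
    ∃ (cgb M ε₀ : ℝ), 0 < cgb ∧ 0 < M ∧ 0 < ε₀ ∧
      ∀ ε : ℝ, 0 < ε → ε ≤ ε₀ →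
        ∃ (Ψ : SphereFun) (F : ℝ → ℝ),
          SphSmooth Ψ ∧ PeriodicPhi Ψ ∧
          sobNormSq 2 Ψ < ⊤ ∧
          (∀ θ ∈ Set.Ioo (0:ℝ) Real.pi, ∀ φ : ℝ,
            lapS Ψ θ φ - 4*γ*Ynm 1 0 θ φ = F (Ψ θ φ)) ∧
          sobNormSq 2 (fun θ φ => β*Ynm 2 0 θ φ + γ*Ynm 1 0 θ φ - Ψ θ φ)
            ≤ ENNReal.ofReal ((M*ε)^2) ∧
          |coeff Ψ 6 2 + β^2 * (1/36) * (45/(11*Real.pi*Real.sqrt 182)) * cgb * ε^2|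
            ≤ M*ε^3 ∧
          |coeff Ψ 4 2 + (1/14) * ((3*Real.sqrt 3/(154*Real.pi))*(11*γ^2 - 5*β^2)
              - β^2 * (1/(7*Real.pi)) * (30*γ^2/(7*γ^2+15*β^2))) * cgb * ε^2|
            ≤ M*ε^3 := by
  have hpi := Real.pi_pos
  have hs3 : 0 < Real.sqrt (3/(4*Real.pi)) := by positivity
  have hs5 : 0 < Real.sqrt (5/(4*Real.pi)) := by positivity
  set g := γ * Real.sqrt (3/(4*Real.pi)) with hg
  set h := β * Real.sqrt (5/(4*Real.pi)) / 2 with hh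
  set T6 := β^2 * (45/(11*Real.pi*Real.sqrt 182)) with hT6
  set T4 := (3*Real.sqrt 3/(154*Real.pi))*(11*γ^2 - 5*β^2)
              - β^2 * (1/(7*Real.pi)) * (30*γ^2/(7*γ^2+15*β^2)) with hT4
  have hk4 := kap_pos 4
  have hk6 := kap_pos 6
  have hgh : g ≠ 0 ∨ h ≠ 0 := by
    by_contra hcon
    push Not at hcon
    obtain ⟨h1, h2⟩ := hcon
    have h3 : γ = 0 := by
      rcases mul_eq_zero.mp h1 with h | h
      · exact h
      · exact absurd h hs3.ne'
    have h4 : β = 0 := by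
      have : β * Real.sqrt (5/(4*Real.pi)) = 0 := by linarith
      rcases mul_eq_zero.mp this with h | h
      · exact h
      · exact absurd h hs5.ne'
    rw [h3, h4] at hβγ
    norm_num at hβγ
  have hs : h = 0 → T6 / (kap 6 2 * Real.pi * 604800) = 0 := by
    intro h0
    have h4 : β = 0 := by
      have : β * Real.sqrt (5/(4*Real.pi)) = 0 := by linarith
      rcases mul_eq_zero.mp this with h | h
      · exact h
      · exact absurd h hs5.ne'
    rw [hT6, h4]; simp
  obtain ⟨p0, p1, p2, p3, E1, E0, E4, E6⟩ := lin_solve g h (T4 / (kap 4 2 * Real.pi * 2880))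
    (T6 / (kap 6 2 * Real.pi * 604800)) hgh hs
  obtain ⟨w, hw, W, C, δ, hC, hδ, hall⟩ := bifur g h p0 p1 p2 p3 hgh E1 E0
  have c4 : cc 4 w.2 = -(1/14) * T4 := by
    have h1 : cc 4 w.2 = ct 4 (fQ g h p0 p1 p2 p3) := by rw [hw]; rfl
    rw [h1, ct4_fQ, cc4_fQ, E4]; field_simp
  have c6 : cc 6 w.2 = -(1/36) * T6 := by
    have h1 : cc 6 w.2 = ct 6 (fQ g h p0 p1 p2 p3) := by rw [hw]; rfl
    rw [h1, ct6_fQ, cc6_fQ, E6]; field_simp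
  obtain ⟨Cs, hCs, hsob⟩ := sob_bound
  set K := ‖w‖ + C with hK
  have hK0 : 0 ≤ K := by positivity
  set M := Cs * (2*K + ‖zp 0‖) + (‖cc 4‖ + ‖cc 6‖) * C + 1 with hM
  refine ⟨1, M, min δ 1, one_pos, by positivity, by positivity, ?_⟩
  intro ε he hle
  have hle1 : ε ≤ δ := hle.trans (min_le_left _ _)
  have hle2 : ε ≤ 1 := hle.trans (min_le_right _ _)
  obtain ⟨hdist, a, b, hk0, hk1, hw0, hw1⟩ := hall ε he hle1
  have hWn : ‖W ε‖ ≤ K := by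
    calc ‖W ε‖ = ‖w + (W ε - w)‖ := by congr 1; abel
      _ ≤ ‖w‖ + ‖W ε - w‖ := norm_add_le _ _
      _ ≤ ‖w‖ + C * ε := by linarith
      _ ≤ K := by nlinarith
  have hcoef : ∀ n : ℕ, 2 < n → ‖cc n‖ * C ≤ M → ∀ t : ℝ, cc n w.2 = -t →
      |coeff (FF (PsiE g h ε (W ε))) n 2 + t * ε^2| ≤ M * ε^3 := by
    intro n hn hMn t ht
    rw [coeff_Psi n hn]
    have h1 : ε^2 * cc n (W ε).2 + t * ε^2 = ε^2 * cc n ((W ε - w).2) := by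
      rw [Prod.snd_sub, map_sub, ht]; ring
    rw [h1, abs_mul, abs_of_nonneg (by positivity : 0 ≤ ε^2)]
    have h2 : |cc n ((W ε - w).2)| ≤ ‖cc n‖ * (C * ε) := by
      rw [← Real.norm_eq_abs]
      refine ((cc n).le_opNorm _).trans ?_
      gcongr
      exact (norm_snd_le _).trans hdist
    calc ε^2 * |cc n ((W ε - w).2)| ≤ ε^2 * (‖cc n‖ * (C * ε)) := by gcongr
      _ = (‖cc n‖ * C) * ε^3 := by ring
      _ ≤ M * ε^3 := by gcongr
  have n4 : 0 ≤ ‖cc 4‖ * C := by positivity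
  have n6 : 0 ≤ ‖cc 6‖ * C := by positivity
  have ns : 0 ≤ Cs * (2*K + ‖zp 0‖) := by positivity
  have hM2 : M = Cs * (2*K + ‖zp 0‖) + ‖cc 4‖ * C + ‖cc 6‖ * C + 1 := by rw [hM]; ring
  have hMs : Cs * (2*K + ‖zp 0‖) ≤ M := by linarith
  refine ⟨FF (PsiE g h ε (W ε)), fun x => -6 * x + ε * (a * (x + h) + b/2 * (x+h)^2
      + p2/3 * (x+h)^3 + p3/4 * (x+h)^4), FF_smooth _, FF_periodic _,
      (hsob _).trans_lt ENNReal.ofReal_lt_top, ?_, ?_, ?_, ?_⟩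
  · intro θ hθ φ
    have := pde g h ε a b p2 p3 (W ε) hk0 hk1 hw0 hw1 θ φ hθ
    show _ = -6 * FF (PsiE g h ε (W ε)) θ φ + _
    rw [← this, Y1, hg]; ring
  · rw [hg, hh, diff_eq]
    refine (hsob _).trans (ENNReal.ofReal_le_ofReal ?_)
    have h1 : ‖(-(ε • (((W ε).1, zp 0 + ε • (W ε).2) : ZZ)) : ZZ)‖ ≤ ε * (2*K + ‖zp 0‖) := by
      rw [norm_neg, norm_smul, Real.norm_eq_abs, abs_of_pos he]
      gcongr
      rw [Prod.norm_def]
      have i1 : ‖(W ε).1‖ ≤ K := (norm_fst_le _).trans hWn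
      have i2 : ‖(W ε).2‖ ≤ K := (norm_snd_le _).trans hWn
      have i3 : ‖ε • (W ε).2‖ ≤ K := by
        rw [norm_smul, Real.norm_eq_abs, abs_of_pos he]
        nlinarith [norm_nonneg (W ε).2]
      have i4 := norm_add_le (zp 0) (ε • (W ε).2)
      have i5 := norm_nonneg (zp 0)
      apply max_le
      · show ‖(W ε).1‖ ≤ _
        linarith
      · show ‖zp 0 + ε • (W ε).2‖ ≤ _
        linarith
    have h2 : Cs * (ε * (2*K + ‖zp 0‖)) ≤ M * ε := by
      calc Cs * (ε * (2*K + ‖zp 0‖)) = Cs * (2*K + ‖zp 0‖) * ε := by ring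
        _ ≤ M * ε := mul_le_mul_of_nonneg_right hMs he.le
    exact pow_le_pow_left₀ (by positivity) ((mul_le_mul_of_nonneg_left h1 hCs.le).trans h2) 2
  · have := hcoef 6 (by omega) (by linarith) (1/36 * T6) (by rw [c6]; ring)
    convert this using 3
    rw [hT6]; ring
  · have := hcoef 4 (by omega) (by linarith) (1/14 * T4) (by rw [c4]; ring)
    convert this using 3
    ring

/-- (`H²` existence theorem.) For `β² + γ² > 0` there exist
`c_{γ,β} > 0`, `M > 0` and `ε₀ > 0` such that for every `0 < ε ≤ ε₀` there are
`Ψ_ε ∈ H²(S²)` and `F_ε : ℝ → ℝ` with `ΔΨ_ε − 4γY₁⁰ = F_ε(Ψ_ε)`,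
`‖βY₂⁰ + γY₁⁰ − Ψ_ε‖_{H²} ≤ Mε`, and the stated second-order expansions of the
coefficients `⟨Ψ_ε, Y₆²⟩` and `⟨Ψ_ε, Y₄²⟩`. -/
theorem H2_existence_near_RossbyHaurwitz (β γ : ℝ) (hβγ : 0 < β^2 + γ^2) :
    ∃ (cgb M ε₀ : ℝ), 0 < cgb ∧ 0 < M ∧ 0 < ε₀ ∧
      ∀ ε : ℝ, 0 < ε → ε ≤ ε₀ →
        ∃ (Ψ : SphereFun) (F : ℝ → ℝ),
          SphSmooth Ψ ∧ PeriodicPhi Ψ ∧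
          sobNormSq 2 Ψ < ⊤ ∧
          (∀ θ ∈ Set.Ioo (0:ℝ) Real.pi, ∀ φ : ℝ,
            lapS Ψ θ φ - 4*γ*Ynm 1 0 θ φ = F (Ψ θ φ)) ∧
          sobNormSq 2 (fun θ φ => β*Ynm 2 0 θ φ + γ*Ynm 1 0 θ φ - Ψ θ φ)
            ≤ ENNReal.ofReal ((M*ε)^2) ∧
          |coeff Ψ 6 2 + β^2 * (1/36) * (45/(11*Real.pi*Real.sqrt 182)) * cgb * ε^2|
            ≤ M*ε^3 ∧
          |coeff Ψ 4 2 + (1/14) * ((3*Real.sqrt 3/(154*Real.pi))*(11*γ^2 - 5*β^2)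
              - β^2 * (1/(7*Real.pi)) * (30*γ^2/(7*γ^2+15*β^2))) * cgb * ε^2|
            ≤ M*ε^3 := by
  exact main_aux β γ hβγ
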